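/- There exists a constant L > 0 such that for every function ω : ℕ → ℝ with ω(n) → ∞ as n → ∞ and every δ ∈ (0,1), for all sufficiently large n, with probability greater than 1 − δ one has α* log n − L log log n ≤ max_{1 ≤ i,j ≤ n} |P_{ij}| ≤ α* log n + ω(n). In particular max_{1 ≤ i,j ≤ n} |P_{ij}| / log n → α* in probability as n → ∞. -/

import Mathlib

/-! Both tails rest on the equation `α log α = α + 1`, equivalently `log α = 1 + 1 / α`.

**Upper tail.** Explore the shortest-path tree from a vertex `i` by Dijkstra's algorithm. By the
memoryless property the lightest edge of the cut between explored and unexplored vertices is uniform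
among the cut edges, and the excesses of the other cut edges are again independent exponentials
(`lintegral_expPi_argmin`). So every new vertex attaches to a uniform explored vertex, the tree is a
random recursive tree, and the expectation of `∑_j z ^ |P_ij|` is at most `∏_{m < n} (1 + z / m)`
(`lintegral_forestSum_le`), which is `O(n ^ z)`. Markov's inequality with `z = α` and a union bound
over `i` give a bound `n ^ (1 + α) α ^ (-(α log n + s))` up to a constant, and the powers of `n`
cancel (`upper_tail`).

**Lower tail.** This is a second moment argument over vertex sequences with `k = ⌊α x⌋` edges, where
`x = log n - C log log n`. A sequence counts (`pathEv`) if its weight is at most `x`, no segment of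
it is much too light (`goodEv`), and no path of weight at most `x` joins two of its vertices off its
own edges (`detEv`). Such a sequence is a minimum-weight path (`le_maxMinLen_of_no_detour`). The
absence of light detours also forces any other light path either to be edge-disjoint from it, hence
independent, or to meet it in one contiguous stretch (`disjoint_or_overlap`). In the second case the
part outside the stretch fits in the slack left by the stretch, which is small by `goodEv`; the
Chernoff bound at parameter `α` then exactly compensates the number of choices of that part, so that
each of the polynomially many (in `k`) overlap patterns contributes only a power of `log n`
(`overlap_inter`, `sum_pair_upper`). The expected number of good paths exceeds this when `C` is large
(`lower_finite`, `lower_quant`).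
-/

open MeasureTheory ProbabilityTheory Real Filter

/-- The complete graph on `n` vertices. -/
def Kn (n : ℕ) : SimpleGraph (Fin n) := ⊤

/-- The canonical probability space for i.i.d. `Exp(mean n)` edge weights on `K_n`:
weights are indexed by `Sym2 (Fin n)` and each coordinate has the exponential
distribution with rate `1/n` (mean `n`). -/
noncomputable def edgeSpace (n : ℕ) : Measure (Sym2 (Fin n) → ℝ) :=
  haveI : ∀ _e : Sym2 (Fin n), SigmaFinite (expMeasure (1 / (n : ℝ))) := fun _e =>
    SigmaFinite.withDensity_of_ne_top' (fun _x => ENNReal.ofReal_ne_top)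
  Measure.pi (fun _e : Sym2 (Fin n) => expMeasure (1 / (n : ℝ)))

/-- The weight of a walk: the sum of the weights of its edges. -/
noncomputable def walkWeight {n : ℕ} (w : Sym2 (Fin n) → ℝ) {i j : Fin n}
    (p : (Kn n).Walk i j) : ℝ := (p.edges.map w).sum

/-- `p` is a minimum-weight path from `i` to `j`. -/
def IsMinPath {n : ℕ} (w : Sym2 (Fin n) → ℝ) {i j : Fin n} (p : (Kn n).Walk i j) : Prop :=
  p.IsPath ∧ ∀ q : (Kn n).Walk i j, q.IsPath → walkWeight w p ≤ walkWeight w q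

/-- `max_{1 ≤ i,j ≤ n} |P_{ij}|` : the largest number of edges of any
minimum-weight path between a pair of vertices. -/
noncomputable def maxMinLen {n : ℕ} (w : Sym2 (Fin n) → ℝ) : ℕ :=
  sSup {L : ℕ | ∃ (i j : Fin n) (p : (Kn n).Walk i j), IsMinPath w p ∧ p.length = L}

open scoped ENNReal

/-! ### Exponential variables -/

section ExpMeasure

lemma isProb_exp {r : ℝ} (hr : 0 < r) : IsProbabilityMeasure (expMeasure r) :=
  isProbabilityMeasure_expMeasure hr

lemma lintegral_expMeasure (r : ℝ) {g : ℝ → ℝ≥0∞} (hg : Measurable g) :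
    ∫⁻ t, g t ∂expMeasure r = ∫⁻ t, exponentialPDF r t * g t := by
  have : expMeasure r = volume.withDensity (exponentialPDF r) := rfl
  rw [this, lintegral_withDensity_eq_lintegral_mul _ _ hg]
  · rfl
  · exact (measurable_exponentialPDFReal r).ennreal_ofReal

/-- Laplace transform of the exponential law. -/
lemma lintegral_expMeasure_exp {r θ : ℝ} (hr : 0 < r) (hθ : 0 ≤ θ) :
    ∫⁻ t, ENNReal.ofReal (exp (-(θ * t))) ∂expMeasure r = ENNReal.ofReal (r / (r + θ)) := by
  rw [lintegral_expMeasure r (by fun_prop)]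
  have h1 : ∀ t, exponentialPDF r t * ENNReal.ofReal (exp (-(θ * t)))
      = ENNReal.ofReal (r / (r + θ)) * exponentialPDF (r + θ) t := by
    intro t
    have hd : 0 < r + θ := by linarith
    rw [exponentialPDF_eq, exponentialPDF_eq]
    split_ifs
    · rw [← ENNReal.ofReal_mul (by positivity), ← ENNReal.ofReal_mul (by positivity)]
      congr 1
      rw [mul_assoc, ← exp_add, ← mul_assoc, div_mul_cancel₀ _ hd.ne']
      congr 2; ring
    · simp
  simp_rw [h1]
  rw [lintegral_const_mul, lintegral_exponentialPDF_eq_one (by linarith), mul_one]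
  exact (measurable_exponentialPDFReal _).ennreal_ofReal

/-- The memoryless property, in integrated form. -/
lemma lintegral_expMeasure_shift {r t : ℝ} (ht : 0 ≤ t) {g : ℝ → ℝ≥0∞} (hg : Measurable g) :
    ∫⁻ s, (if t < s then g (s - t) else 0) ∂expMeasure r
      = ENNReal.ofReal (exp (-(r * t))) * ∫⁻ s, g s ∂expMeasure r := by
  rw [lintegral_expMeasure r, lintegral_expMeasure r hg]
  · rw [← lintegral_const_mul]
    · rw [← lintegral_sub_right_eq_self
        (fun s => ENNReal.ofReal (exp (-(r * t))) * (exponentialPDF r s * g s)) t]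
      apply lintegral_congr_ae
      have : ∀ᵐ s : ℝ ∂volume, s ≠ t := by
        simp [ae_iff]
      filter_upwards [this] with s hs
      simp only [exponentialPDF_eq]
      by_cases h : t < s
      · rw [if_pos h, if_pos (by linarith), if_pos (by linarith), ← mul_assoc]
        congr 1
        rw [← ENNReal.ofReal_mul (by positivity)]
        congr 1
        rw [mul_left_comm, ← exp_add]
        congr 2; ring
      · have h' : s < t := lt_of_le_of_ne (not_lt.1 h) hs
        rw [if_neg h, if_neg (c := 0 ≤ s - t) (by linarith)]
        simp
    · exact ((measurable_exponentialPDFReal _).ennreal_ofReal).mul hg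
  · exact Measurable.ite measurableSet_Ioi (by fun_prop) measurable_const

lemma expMeasure_pos_ae {r : ℝ} (hr : 0 < r) : ∀ᵐ t ∂expMeasure r, 0 < t := by
  have hm : Measurable (fun t : ℝ => if 0 < t then (0 : ℝ≥0∞) else 1) :=
    Measurable.ite measurableSet_Ioi measurable_const measurable_const
  have h0 : ∫⁻ t, (if 0 < t then (0 : ℝ≥0∞) else 1) ∂expMeasure r = 0 := by
    rw [lintegral_expMeasure r hm, lintegral_eq_zero_iff]
    · have : ∀ᵐ s : ℝ ∂volume, s ≠ 0 := by simp [ae_iff]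
      filter_upwards [this] with s hs
      rcases lt_or_gt_of_ne hs with h | h
      · simp [exponentialPDF_of_neg h]
      · simp [h]
    · exact ((measurable_exponentialPDFReal _).ennreal_ofReal).mul hm
  rw [lintegral_eq_zero_iff hm] at h0
  filter_upwards [h0] with t ht
  by_contra hc
  simp [hc] at ht

end ExpMeasure

/-! ### Products of exponential laws -/

section Product

variable {ι : Type*} [Fintype ι] [DecidableEq ι]

/-- Resampling one coordinate of a product measure does not change it. -/
lemma lintegral_pi_resample (ν : Measure ℝ) [IsProbabilityMeasure ν] (e : ι)
    {F : (ι → ℝ) → ℝ≥0∞} (hF : Measurable F) :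
    ∫⁻ x, F x ∂(Measure.pi fun _ : ι => ν)
      = ∫⁻ x, (∫⁻ t, F (Function.update x e t) ∂ν) ∂(Measure.pi fun _ : ι => ν) := by
  refine lintegral_eq_of_lmarginal_eq {e} hF ?_ ?_
  · refine Measurable.lintegral_prod_right' (f := fun p : (ι → ℝ) × ℝ => F (Function.update p.1 e p.2)) ?_
    fun_prop
  · funext x
    rw [lmarginal_singleton, lmarginal_singleton]
    simp

/-- Functions of disjoint sets of coordinates factorise. -/
lemma lintegral_pi_mul_of_dependsOn (ν : Measure ℝ) [IsProbabilityMeasure ν] (S : Finset ι)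
    {F G : (ι → ℝ) → ℝ≥0∞} (hF : Measurable F) (hG : Measurable G)
    (hFS : DependsOn F (S : Set ι)) (hGS : DependsOn G (S : Set ι)ᶜ) :
    ∫⁻ x, F x * G x ∂(Measure.pi fun _ : ι => ν)
      = (∫⁻ x, F x ∂(Measure.pi fun _ : ι => ν)) * ∫⁻ x, G x ∂(Measure.pi fun _ : ι => ν) := by
  refine lintegral_mul_eq_lintegral_mul_lintegral_of_indepFun hF hG ?_
  have hi : iIndepFun (fun (i : ι) (x : ι → ℝ) => x i) (Measure.pi fun _ : ι => ν) :=
    iIndepFun_pi (X := fun _ => id) (fun _ => aemeasurable_id)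
  have hd : Disjoint S Sᶜ := disjoint_compl_right
  have h2 := hi.indepFun_finset S Sᶜ hd (fun i => measurable_pi_apply i)
  let F' : (S → ℝ) → ℝ≥0∞ := fun y => F (fun i => if h : i ∈ S then y ⟨i, h⟩ else 0)
  let G' : ((Sᶜ : Finset ι) → ℝ) → ℝ≥0∞ := fun y => G (fun i => if h : i ∈ Sᶜ then y ⟨i, h⟩ else 0)
  have hF' : Measurable F' := by
    refine hF.comp (measurable_pi_lambda _ fun i => ?_)
    split_ifs <;> fun_prop
  have hG' : Measurable G' := by
    refine hG.comp (measurable_pi_lambda _ fun i => ?_)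
    split_ifs <;> fun_prop
  have h3 := h2.comp hF' hG'
  have e1 : F = F' ∘ fun a (i : S) => a i := by
    funext x
    exact hFS (fun i hi => by simp at hi; simp [hi])
  have e2 : G = G' ∘ fun a (i : (Sᶜ : Finset ι)) => a i := by
    funext x
    exact hGS (fun i hi => by simp at hi; simp [hi])
  rw [e1, e2]
  exact h3

variable {r : ℝ}

lemma expPi_pos_ae (hr : 0 < r) : ∀ᵐ x ∂(Measure.pi fun _ : ι => expMeasure r), ∀ i, 0 < x i := by
  have := isProb_exp hr
  rw [eventually_countable_forall]
  intro i
  exact (Measure.tendsto_eval_ae_ae (μ := fun _ : ι => expMeasure r) (i := i)).eventually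
    (expMeasure_pos_ae hr)

/-- Laplace transform of a family of distinct coordinates. -/
lemma lintegral_expPi_exp (hr : 0 < r) (S : Finset ι) (θ : ι → ℝ) (hθ : ∀ i, 0 ≤ θ i) :
    ∫⁻ x, ENNReal.ofReal (exp (-∑ i ∈ S, θ i * x i)) ∂(Measure.pi fun _ : ι => expMeasure r)
      = ENNReal.ofReal (∏ i ∈ S, r / (r + θ i)) := by
  have := isProb_exp hr
  induction S using Finset.induction_on with
  | empty => simp
  | insert e S he ih =>
    rw [lintegral_pi_resample _ e (by fun_prop)]
    have h1 : ∀ x : ι → ℝ, ∫⁻ t, ENNReal.ofReal (exp (-∑ i ∈ insert e S,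
        θ i * Function.update x e t i)) ∂expMeasure r
        = ENNReal.ofReal (r / (r + θ e)) * ENNReal.ofReal (exp (-∑ i ∈ S, θ i * x i)) := by
      intro x
      rw [← lintegral_expMeasure_exp hr (hθ e), ← lintegral_mul_const _ (by fun_prop)]
      refine lintegral_congr fun t => ?_
      rw [Finset.sum_insert he, Function.update_self, neg_add, exp_add,
        ENNReal.ofReal_mul (by positivity)]
      congr 4
      refine Finset.sum_congr rfl fun i hi => ?_
      rw [Function.update_of_ne]
      rintro rfl; exact he hi
    simp_rw [h1]
    rw [lintegral_const_mul _ (by fun_prop), ih, Finset.prod_insert he, ENNReal.ofReal_mul]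
    have := hθ e
    positivity

/-- Lower bound on the probability that a sum of `|S|` independent exponentials is at most `y`. -/
lemma expPi_sum_le_lower (hr : 0 < r) (S : Finset ι) : ∀ y : ℝ, 0 ≤ y →
    ENNReal.ofReal (exp (-(r * y)) * (r * y) ^ S.card / (S.card.factorial : ℝ))
      ≤ (Measure.pi fun _ : ι => expMeasure r) {x | ∑ i ∈ S, x i ≤ y} := by
  have := isProb_exp hr
  induction S using Finset.induction_on with
  | empty =>
    intro y hy
    simp [hy]
    positivity
  | insert e S he ih =>
    intro y hy
    have hms : MeasurableSet {x : ι → ℝ | ∑ i ∈ insert e S, x i ≤ y} :=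
      measurableSet_le (by fun_prop) (by fun_prop)
    rw [← lintegral_indicator_one hms, lintegral_pi_resample _ e (measurable_one.indicator hms)]
    rw [lintegral_lintegral_swap]
    rotate_left
    · have : Measurable (fun p : (ι → ℝ) × ℝ => Function.update p.1 e p.2) := by fun_prop
      exact ((measurable_one.indicator hms).comp this).aemeasurable
    have h1 : ∀ t : ℝ, ∫⁻ x, Set.indicator {x : ι → ℝ | ∑ i ∈ insert e S, x i ≤ y} 1
        (Function.update x e t) ∂(Measure.pi fun _ : ι => expMeasure r)
        = (Measure.pi fun _ : ι => expMeasure r) {x | ∑ i ∈ S, x i ≤ y - t} := by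
      intro t
      have hms' : MeasurableSet {x : ι → ℝ | ∑ i ∈ S, x i ≤ y - t} :=
        measurableSet_le (by fun_prop) (by fun_prop)
      rw [← lintegral_indicator_one hms']
      refine lintegral_congr fun x => ?_
      have : ∑ i ∈ insert e S, Function.update x e t i = t + ∑ i ∈ S, x i := by
        rw [Finset.sum_insert he, Function.update_self]
        congr 1
        refine Finset.sum_congr rfl fun i hi => ?_
        rw [Function.update_of_ne]
        rintro rfl; exact he hi
      simp only [Set.indicator_apply, Set.mem_ofPred_eq, this]
      congr 1
      rw [le_sub_iff_add_le, add_comm]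
    simp_rw [h1]
    rw [Finset.card_insert_of_notMem he]
    set k := S.card
    let g : ℝ → ℝ≥0∞ := fun t => if 0 ≤ t ∧ t ≤ y then
      ENNReal.ofReal (exp (-(r * (y - t))) * (r * (y - t)) ^ k / (k.factorial : ℝ)) else 0
    have hgm : Measurable g :=
      Measurable.ite (measurableSet_Icc) (by fun_prop) measurable_const
    have h2 : ∫⁻ t, g t ∂expMeasure r ≤ ∫⁻ t,
        (Measure.pi fun _ : ι => expMeasure r) {x | ∑ i ∈ S, x i ≤ y - t} ∂expMeasure r := by
      refine lintegral_mono fun t => ?_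
      by_cases h : 0 ≤ t ∧ t ≤ y
      · simp only [g, if_pos h]
        exact ih _ (by linarith [h.2])
      · simp only [g, if_neg h, zero_le]
    refine le_trans (le_of_eq ?_) h2
    rw [lintegral_expMeasure r hgm]
    have h3 : ∀ t, exponentialPDF r t * g t = Set.indicator (Set.Icc 0 y) (fun t =>
        ENNReal.ofReal (exp (-(r * y)) * r ^ (k + 1) / (k.factorial : ℝ) * (y - t) ^ k)) t := by
      intro t
      by_cases h : t ∈ Set.Icc 0 y
      · rw [Set.indicator_of_mem h]
        simp only [g]
        rw [if_pos ⟨h.1, h.2⟩, exponentialPDF_of_nonneg h.1, ← ENNReal.ofReal_mul (by positivity)]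
        congr 1
        have : exp (-(r * y)) = exp (-(r * t)) * exp (-(r * (y - t))) := by
          rw [← exp_add]; congr 1; ring
        rw [this, mul_pow]
        ring
      · rw [Set.indicator_of_notMem h]
        simp only [g]
        rw [if_neg (by simpa using h), mul_zero]
    simp_rw [h3]
    rw [lintegral_indicator measurableSet_Icc, ← ofReal_integral_eq_lintegral_ofReal]
    · congr 1
      rw [integral_Icc_eq_integral_Ioc, ← intervalIntegral.integral_of_le hy,
        intervalIntegral.integral_const_mul,
        intervalIntegral.integral_comp_sub_left (fun s => s ^ k) y]
      simp only [sub_self, sub_zero, integral_pow]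
      rw [Nat.factorial_succ]
      push_cast
      have : (k.factorial : ℝ) ≠ 0 := by positivity
      have : (k + 1 : ℝ) ≠ 0 := by positivity
      field_simp
      simp [mul_pow]
    · exact (Continuous.integrableOn_Icc (by fun_prop))
    · refine (ae_restrict_iff' measurableSet_Icc).2 (Eventually.of_forall fun t ht => ?_)
      have := sub_nonneg.2 ht.2
      simp only [Pi.zero_apply]
      positivity

/-- Memoryless property for several coordinates at once. -/
lemma lintegral_expPi_shift (hr : 0 < r) {t : ℝ} (ht : 0 ≤ t) (S : Finset ι) :
    ∀ {F : (ι → ℝ) → ℝ≥0∞}, Measurable F →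
    ∫⁻ x, (if ∀ i ∈ S, t < x i then F (fun i => if i ∈ S then x i - t else x i) else 0)
        ∂(Measure.pi fun _ : ι => expMeasure r)
      = ENNReal.ofReal (exp (-(r * t))) ^ S.card *
        ∫⁻ x, F x ∂(Measure.pi fun _ : ι => expMeasure r) := by
  have := isProb_exp hr
  induction S using Finset.induction_on with
  | empty => intro F hF; simp
  | insert e S he ih =>
    intro F hF
    let G : (ι → ℝ) → ℝ≥0∞ := fun x => if t < x e then F (Function.update x e (x e - t)) else 0
    have hG : Measurable G := by
      refine Measurable.ite (measurableSet_lt (by fun_prop) (by fun_prop)) ?_ measurable_const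
      exact hF.comp (by fun_prop)
    have h1 : ∀ x : ι → ℝ, (if ∀ i ∈ insert e S, t < x i then
        F (fun i => if i ∈ insert e S then x i - t else x i) else 0)
        = if ∀ i ∈ S, t < x i then G (fun i => if i ∈ S then x i - t else x i) else 0 := by
      intro x
      by_cases h : ∀ i ∈ S, t < x i
      · rw [if_pos h]
        simp only [G, he, if_false, Finset.forall_mem_insert]
        simp only [eq_true h, and_true]
        congr 2
        funext i
        by_cases hi : i = e
        · subst hi; simp
        · simp [hi]
      · simp [h]
    rw [lintegral_congr h1, ih hG, Finset.card_insert_of_notMem he, pow_succ, mul_assoc]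
    congr 1
    rw [lintegral_pi_resample _ e hG, lintegral_pi_resample _ e hF, ← lintegral_const_mul]
    · refine lintegral_congr fun x => ?_
      simp only [G, Function.update_self, Function.update_idem]
      exact lintegral_expMeasure_shift ht (g := fun s => F (Function.update x e s))
        (hF.comp (by fun_prop))
    · refine Measurable.lintegral_prod_right'
        (f := fun p : (ι → ℝ) × ℝ => F (Function.update p.1 e p.2)) ?_
      exact hF.comp (by fun_prop)

/-- Extracting the minimum of finitely many independent exponentials: each of the `|E|` coordinates
is the strict minimum with probability `1 / |E|`, and the excesses of the others are again
independent exponentials, independent of which coordinate is minimal. -/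
lemma lintegral_expPi_argmin (hr : 0 < r) (E : Finset ι) {e : ι} (he : e ∈ E)
    {F : (ι → ℝ) → ℝ≥0∞} (hF : Measurable F) (hFe : DependsOn F {i | i ≠ e}) :
    ∫⁻ x, (if ∀ i ∈ E.erase e, x e < x i then F (fun i => if i ∈ E then x i - x e else x i) else 0)
        ∂(Measure.pi fun _ : ι => expMeasure r)
      = (E.card : ℝ≥0∞)⁻¹ * ∫⁻ x, F x ∂(Measure.pi fun _ : ι => expMeasure r) := by
  have := isProb_exp hr
  have hm0 : Measurable (fun x : ι → ℝ => fun i => if i ∈ E then x i - x e else x i) := by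
    refine measurable_pi_lambda _ fun i => ?_
    split_ifs <;> fun_prop
  have hms : MeasurableSet {x : ι → ℝ | ∀ i ∈ E.erase e, x e < x i} := by
    have : {x : ι → ℝ | ∀ i ∈ E.erase e, x e < x i} = ⋂ i ∈ E.erase e, {x | x e < x i} := by
      ext; simp
    rw [this]
    exact Finset.measurableSet_biInter _ fun i _ => measurableSet_lt (by fun_prop) (by fun_prop)
  have hH : Measurable (fun x : ι → ℝ => if ∀ i ∈ E.erase e, x e < x i then
      F (fun i => if i ∈ E then x i - x e else x i) else 0) :=
    Measurable.ite hms (hF.comp hm0) measurable_const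
  rw [lintegral_pi_resample _ e hH, lintegral_lintegral_swap]
  rotate_left
  · exact (hH.comp (by fun_prop : Measurable
      (fun p : (ι → ℝ) × ℝ => Function.update p.1 e p.2))).aemeasurable
  have h1 : ∀ t : ℝ, ∀ x : ι → ℝ, (if ∀ i ∈ E.erase e, Function.update x e t e <
      Function.update x e t i then F (fun i => if i ∈ E then Function.update x e t i -
        Function.update x e t e else Function.update x e t i) else 0)
      = if ∀ i ∈ E.erase e, t < x i then
        F (fun i => if i ∈ E.erase e then x i - t else x i) else 0 := by
    intro t x
    have hc : (∀ i ∈ E.erase e, Function.update x e t e < Function.update x e t i) ↔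
        ∀ i ∈ E.erase e, t < x i := by
      refine forall₂_congr fun i hi => ?_
      rw [Function.update_self, Function.update_of_ne (Finset.ne_of_mem_erase hi)]
    simp only [hc]
    congr 1
    refine hFe fun i hi => ?_
    simp only [Set.mem_ofPred_eq] at hi
    simp [Function.update_of_ne hi, hi]
  simp_rw [h1]
  have h2 : ∫⁻ t, ∫⁻ x, (if ∀ i ∈ E.erase e, t < x i then
        F (fun i => if i ∈ E.erase e then x i - t else x i) else 0)
        ∂(Measure.pi fun _ : ι => expMeasure r) ∂expMeasure r
      = ∫⁻ t, ENNReal.ofReal (exp (-(((E.erase e).card * r) * t))) *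
        ∫⁻ x, F x ∂(Measure.pi fun _ : ι => expMeasure r) ∂expMeasure r := by
    apply lintegral_congr_ae
    filter_upwards [expMeasure_pos_ae hr] with t ht
    rw [lintegral_expPi_shift hr ht.le _ hF, ← ENNReal.ofReal_pow (by positivity), ← exp_nat_mul]
    congr 3
    ring
  rw [h2, lintegral_mul_const _ (by fun_prop), lintegral_expMeasure_exp hr (by positivity)]
  congr 1
  have hc : ((E.erase e).card : ℝ) + 1 = E.card := by
    exact_mod_cast Finset.card_erase_add_one he
  have : r / (r + (E.erase e).card * r) = (E.card : ℝ)⁻¹ := by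
    rw [← hc]
    field_simp
    ring
  rw [this, ENNReal.ofReal_inv_of_pos, ENNReal.ofReal_natCast]
  exact_mod_cast Finset.card_pos.2 ⟨e, he⟩

end Product

/-! ### Exploration from a source set -/

section Exploration

variable {V : Type*}

/-- Weight of the walk that starts at `a` and then visits the vertices of `l` in order. -/
def chainCost (w : Sym2 V → ℝ) : V → List V → ℝ
  | _, [] => 0
  | a, b :: l => w s(a, b) + chainCost w b l

lemma chainCost_nonneg {w : Sym2 V → ℝ} (hw : ∀ e, 0 < w e) (a : V) (l : List V) :
    0 ≤ chainCost w a l := by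
  induction l generalizing a with
  | nil => simp [chainCost]
  | cons b l ih => simp only [chainCost]; linarith [ih b, hw s(a, b)]

/-- If the walk stays outside `B`, only the weights of edges with both endpoints outside `B` matter. -/
lemma chainCost_congr {w w' : Sym2 V → ℝ} (B : Set V)
    (h : ∀ u v, u ∉ B → v ∉ B → w s(u, v) = w' s(u, v)) {a : V} (ha : a ∉ B) {l : List V}
    (hl : ∀ v ∈ l, v ∉ B) : chainCost w a l = chainCost w' a l := by
  induction l generalizing a with
  | nil => simp [chainCost]
  | cons b l ih =>
    have hb := hl b (by simp)
    simp only [chainCost]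
    rw [h a b ha hb, ih hb fun v hv => hl v (by simp [hv])]

/-- If the walk avoids `B` after its starting point, edges inside `B` do not matter. -/
lemma chainCost_congr' {w w' : Sym2 V → ℝ} (B : Set V)
    (h : ∀ u v, v ∉ B → w s(u, v) = w' s(u, v)) {a : V} {l : List V}
    (hl : ∀ v ∈ l, v ∉ B) : chainCost w a l = chainCost w' a l := by
  induction l generalizing a with
  | nil => simp [chainCost]
  | cons b l ih =>
    have hb := hl b (by simp)
    simp only [chainCost]
    rw [h a b hb, ih fun v hv => hl v (by simp [hv])]

/-- The part of a walk after a visit to `b` ends at the same vertex and is no heavier. -/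
lemma chainCost_drop {w : Sym2 V → ℝ} (hw : ∀ e, 0 < w e) {b : V} {a : V} {l : List V}
    (hb : b ∈ a :: l) : ∃ l₂ : List V, (∀ v ∈ l₂, v ∈ l) ∧ l₂.getLastD b = l.getLastD a ∧
      chainCost w b l₂ ≤ chainCost w a l := by
  induction l generalizing a with
  | nil =>
    simp at hb
    subst hb
    exact ⟨[], by simp, rfl, le_rfl⟩
  | cons c l ih =>
    rcases List.mem_cons.1 hb with rfl | hb
    · exact ⟨c :: l, by simp, rfl, le_rfl⟩
    · obtain ⟨l₂, h1, h2, h3⟩ := ih hb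
      refine ⟨l₂, fun v hv => by simp [h1 v hv], by rw [h2, List.getLastD_cons], ?_⟩
      simp only [chainCost]
      linarith [hw s(a, c)]

/-- `(a, l)` is a walk from `a ∈ B` to `j` that leaves `B` at its first step for good. -/
def ExitChain (B : Finset V) (j a : V) (l : List V) : Prop :=
  a ∈ B ∧ (∀ v ∈ l, v ∉ B) ∧ l.getLastD a = j

/-- `(a, l)` has minimal weight among the walks from `B` to `j` that do not return to `B`. -/
def IsGeo (B : Finset V) (w : Sym2 V → ℝ) (j a : V) (l : List V) : Prop :=
  ExitChain B j a l ∧ ∀ a' l', ExitChain B j a' l' → chainCost w a l ≤ chainCost w a' l'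

lemma getLastD_mem_or (l : List V) (a : V) : (l = [] ∧ l.getLastD a = a) ∨ l.getLastD a ∈ l := by
  cases l with
  | nil => left; simp
  | cons b l =>
    right
    rw [List.getLastD_cons]
    induction l generalizing b with
    | nil => simp
    | cons x l ih => rw [List.getLastD_cons]; exact List.mem_cons_of_mem _ (ih x)

variable [Fintype V] [DecidableEq V]

/-- The generating function of the shortest-path forest grown from the sources `B`: every vertex
`j` contributes `c a * z ^ m`, where `a` is the source of its geodesic and `m` the number of edges
(the supremum only matters on the null event of ties). -/
noncomputable def forestSum (B : Finset V) (c : V → ℝ≥0∞) (z : ℝ≥0∞) (w : Sym2 V → ℝ) : ℝ≥0∞ :=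
  ∑ j, ⨆ p : V × List V,
    Set.indicator {w | IsGeo B w j p.1 p.2} (fun _ => c p.1 * z ^ p.2.length) w

/-- The edges between `B` and its complement. -/
def cutEdges (B : Finset V) : Finset (Sym2 V) := (B ×ˢ Bᶜ).image fun p => s(p.1, p.2)

lemma mem_cutEdges {B : Finset V} {a b : V} (ha : a ∈ B) (hb : b ∉ B) : s(a, b) ∈ cutEdges B :=
  Finset.mem_image.2 ⟨(a, b), by simp [ha, hb], rfl⟩

lemma not_mem_cutEdges {B : Finset V} {a b : V} (ha : a ∉ B) (hb : b ∉ B) :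
    s(a, b) ∉ cutEdges B := by
  intro h
  obtain ⟨⟨x, y⟩, hp, he⟩ := Finset.mem_image.1 h
  simp only [Finset.mem_product, Finset.mem_compl] at hp
  rcases Sym2.eq_iff.1 he with ⟨rfl, rfl⟩ | ⟨rfl, rfl⟩
  · exact ha hp.1
  · exact hb hp.1

lemma cut_inj {B : Finset V} {a b a' b' : V} (ha : a ∈ B) (hb : b ∉ B) (ha' : a' ∈ B)
    (hb' : b' ∉ B) (h : s(a, b) = s(a', b')) : a = a' ∧ b = b' := by
  rcases Sym2.eq_iff.1 h with h | ⟨rfl, rfl⟩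
  · exact h
  · exact absurd ha hb'

lemma card_cutEdges (B : Finset V) : (cutEdges B).card = B.card * Bᶜ.card := by
  rw [cutEdges, Finset.card_image_of_injOn, Finset.card_product]
  rintro ⟨a, b⟩ h ⟨a', b'⟩ h' heq
  simp only [Finset.coe_product, Set.mem_prod, Finset.mem_coe, Finset.mem_compl] at h h'
  obtain ⟨h1, h2⟩ := cut_inj h.1 h.2 h'.1 h'.2 heq
  simp [h1, h2]

/-- Dijkstra step: if `s(a₀, b₀)` is the strictly lightest edge leaving `B`, then geodesics from
`B` are, after subtracting this weight from all cut edges, geodesics from `insert b₀ B`. -/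
lemma geo_step {B : Finset V} {w : Sym2 V → ℝ} (hw : ∀ e, 0 < w e) {a₀ b₀ : V} (ha₀ : a₀ ∈ B)
    (hb₀ : b₀ ∉ B) (hmin : ∀ e ∈ (cutEdges B).erase s(a₀, b₀), w s(a₀, b₀) < w e)
    (c : V → ℝ≥0∞) (z : ℝ≥0∞) {j a : V} {l : List V} (h : IsGeo B w j a l) :
    ∃ a' l', IsGeo (insert b₀ B)
      (fun e => if e ∈ cutEdges B then w e - w s(a₀, b₀) else w e) j a' l' ∧
      c a * z ^ l.length = Function.update c b₀ (z * c a₀) a' * z ^ l'.length := by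
  set t := w s(a₀, b₀) with ht
  set w' : Sym2 V → ℝ := fun e => if e ∈ cutEdges B then w e - t else w e with hw'
  obtain ⟨⟨haB, hlB, hlast⟩, hopt⟩ := h
  have hne : ∀ x ∈ B, x ≠ b₀ := fun x hx h => hb₀ (h ▸ hx)
  have hle : ∀ a b, a ∈ B → b ∉ B → t ≤ w s(a, b) := by
    intro a b ha hb
    by_cases h : s(a, b) = s(a₀, b₀)
    · rw [h]
    · exact (hmin _ (Finset.mem_erase.2 ⟨h, mem_cutEdges ha hb⟩)).le
  have hlt : ∀ a b, a ∈ B → b ∉ B → (a ≠ a₀ ∨ b ≠ b₀) → t < w s(a, b) := by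
    intro a b ha hb hab
    refine hmin _ (Finset.mem_erase.2 ⟨fun h => ?_, mem_cutEdges ha hb⟩)
    obtain ⟨h1, h2⟩ := cut_inj ha hb ha₀ hb₀ h
    tauto
  -- outside `B` the weights agree
  have hin : ∀ {x : V} {m : List V}, x ∉ B → (∀ v ∈ m, v ∉ B) →
      chainCost w' x m = chainCost w x m := by
    intro x m hx hm
    refine chainCost_congr (B : Set V) (fun u v hu hv => ?_) (by simpa using hx) (by simpa using hm)
    simp only [hw', if_neg (not_mem_cutEdges (by simpa using hu) (by simpa using hv))]
  have hw'nn : ∀ x m, ExitChain (insert b₀ B) j x m → 0 ≤ chainCost w' x m := by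
    rintro x m ⟨hx, hm, -⟩
    have hmB : ∀ v ∈ m, v ∉ B := fun v hv h => hm v hv (by simp [h])
    cases m with
    | nil => simp [chainCost]
    | cons b m =>
      rcases Finset.mem_insert.1 hx with rfl | hx
      · rw [hin hb₀ hmB]; exact chainCost_nonneg hw _ _
      · have hb := hmB b (by simp)
        simp only [chainCost]
        rw [hin hb fun v hv => hmB v (by simp [hv])]
        have : w' s(x, b) = w s(x, b) - t := by simp only [hw', if_pos (mem_cutEdges hx hb)]
        rw [this]
        linarith [hle x b hx hb, chainCost_nonneg hw b m]
  cases l with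
  | nil =>
    refine ⟨a, [], ⟨⟨by simp [haB], by simp, hlast⟩, fun a' l' h' => ?_⟩, ?_⟩
    · simpa [chainCost] using hw'nn a' l' h'
    · rw [Function.update_of_ne (hne a haB)]
  | cons b l =>
    have hbB : b ∉ B := hlB b (by simp)
    have hlB' : ∀ v ∈ l, v ∉ B := fun v hv => hlB v (by simp [hv])
    have hjB : j ∉ B := by
      rcases getLastD_mem_or (b :: l) a with h | h
      · simp at h
      · rw [hlast] at h; exact hlB j h
    -- every competitor lifts back to a walk leaving `B`
    have hcomp : ∀ a' l', ExitChain (insert b₀ B) j a' l' →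
        chainCost w a (b :: l) ≤ t + chainCost w' a' l' := by
      rintro a' l' ⟨ha', hl', hlast'⟩
      have hlB2 : ∀ v ∈ l', v ∉ B := fun v hv h => hl' v hv (by simp [h])
      rcases Finset.mem_insert.1 ha' with rfl | ha'
      · rw [hin hb₀ hlB2]
        refine hopt a₀ (a' :: l') ⟨ha₀, ?_, ?_⟩
        · intro v hv
          rcases List.mem_cons.1 hv with rfl | hv
          · exact hb₀
          · exact hlB2 v hv
        · rw [List.getLastD_cons]; exact hlast'
      · cases l' with
        | nil =>
          simp at hlast'
          exact absurd (hlast' ▸ ha') hjB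
        | cons x l' =>
          have hx := hlB2 x (by simp)
          have h1 := hopt a' (x :: l') ⟨ha', hlB2, hlast'⟩
          simp only [chainCost] at h1 ⊢
          rw [hin hx fun v hv => hlB2 v (by simp [hv])]
          have : w' s(a', x) = w s(a', x) - t := by simp only [hw', if_pos (mem_cutEdges ha' hx)]
          rw [this]
          linarith
    have hshort : ∀ l₂ : List V, (∀ v ∈ l₂, v ∈ b :: l) → l₂.getLastD b₀ = j →
        w s(a, b) + chainCost w b l ≤ t + chainCost w b₀ l₂ := by
      intro l₂ h1 h2
      refine hopt a₀ (b₀ :: l₂) ⟨ha₀, ?_, ?_⟩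
      · intro v hv
        rcases List.mem_cons.1 hv with rfl | hv
        · exact hb₀
        · exact hlB v (h1 v hv)
      · rw [List.getLastD_cons]; exact h2
    rw [List.getLastD_cons] at hlast
    by_cases hbb : b = b₀
    · subst hbb
      have haa : a = a₀ := by
        by_contra hne
        have h1 := hlt a b haB hbB (Or.inl hne)
        have h2 := hshort l (fun v hv => by simp [hv]) hlast
        linarith
      subst haa
      have hbl : b ∉ l := by
        intro hb
        cases l with
        | nil => simp at hb
        | cons x l =>
          obtain ⟨l₂, h1, h2, h3⟩ := chainCost_drop hw hb
          have h4 := hshort l₂ (fun v hv => by simp [h1 v hv]) (by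
            rw [h2, ← hlast, List.getLastD_cons])
          simp only [chainCost] at h4
          linarith [hw s(b, x)]
      refine ⟨b, l, ⟨⟨by simp, ?_, hlast⟩, fun a' l' h' => ?_⟩, ?_⟩
      · intro v hv h
        rcases Finset.mem_insert.1 h with rfl | h
        · exact hbl hv
        · exact hlB' v hv h
      · have h1 := hcomp a' l' h'
        simp only [chainCost] at h1
        rw [hin hbB hlB']
        linarith
      · rw [Function.update_self, List.length_cons, pow_succ]
        ring
    · have hbl : b₀ ∉ b :: l := by
        intro hb
        obtain ⟨l₂, h1, h2, h3⟩ := chainCost_drop hw hb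
        have h4 := hshort l₂ (fun v hv => by simp [h1 v hv]) (by rw [h2, hlast])
        linarith [hlt a b haB hbB (Or.inr hbb)]
      refine ⟨a, b :: l, ⟨⟨by simp [haB], ?_, by rw [List.getLastD_cons]; exact hlast⟩,
        fun a' l' h' => ?_⟩, ?_⟩
      · intro v hv h
        rcases Finset.mem_insert.1 h with rfl | h
        · exact hbl hv
        · exact hlB v hv h
      · have h1 := hcomp a' l' h'
        simp only [chainCost] at h1 ⊢
        rw [hin hbB hlB']
        have : w' s(a, b) = w s(a, b) - t := by simp only [hw', if_pos (mem_cutEdges haB hbB)]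
        rw [this]
        linarith
      · rw [Function.update_of_ne (hne a haB)]

/-- One Dijkstra step: the new vertex `b₀` becomes a source that carries the coefficient of its
parent `a₀` times `z`. -/
lemma forestSum_step {B : Finset V} {w : Sym2 V → ℝ} (hw : ∀ e, 0 < w e) {a₀ b₀ : V} (ha₀ : a₀ ∈ B)
    (hb₀ : b₀ ∉ B) (hmin : ∀ e ∈ (cutEdges B).erase s(a₀, b₀), w s(a₀, b₀) < w e)
    (c : V → ℝ≥0∞) (z : ℝ≥0∞) :
    forestSum B c z w ≤ forestSum (insert b₀ B) (Function.update c b₀ (z * c a₀)) z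
      (fun e => if e ∈ cutEdges B then w e - w s(a₀, b₀) else w e) := by
  refine Finset.sum_le_sum fun j _ => iSup_le fun p => ?_
  by_cases h : IsGeo B w j p.1 p.2
  · obtain ⟨a', l', h1, h2⟩ := geo_step hw ha₀ hb₀ hmin c z h
    rw [Set.indicator_of_mem (by exact h), h2]
    refine le_iSup_of_le (a', l') ?_
    rw [Set.indicator_of_mem (by exact h1)]
  · rw [Set.indicator_of_notMem (by exact h)]
    exact zero_le

lemma measurable_chainCost (a : V) (l : List V) :
    Measurable fun w : Sym2 V → ℝ => chainCost w a l := by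
  induction l generalizing a with
  | nil => simp only [chainCost]; fun_prop
  | cons b l ih => simp only [chainCost]; exact (measurable_pi_apply _).add (ih b)

lemma measurable_forestSum (B : Finset V) (c : V → ℝ≥0∞) (z : ℝ≥0∞) :
    Measurable (forestSum B c z) := by
  refine Finset.measurable_sum _ fun j _ => Measurable.iSup fun p => ?_
  refine measurable_const.indicator ?_
  have : {w | IsGeo B w j p.1 p.2} = {_w | ExitChain B j p.1 p.2} ∩ ⋂ q : V × List V,
      ({_w | ¬ ExitChain B j q.1 q.2} ∪ {w | chainCost w p.1 p.2 ≤ chainCost w q.1 q.2}) := by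
    ext w
    simp only [IsGeo, Set.mem_inter_iff, Set.mem_iInter, Set.mem_union, Prod.forall,
      Set.mem_ofPred_eq, ← imp_iff_not_or]
  rw [this]
  refine (MeasurableSet.const _).inter (MeasurableSet.iInter fun q => (MeasurableSet.const _).union ?_)
  exact measurableSet_le (measurable_chainCost _ _) (measurable_chainCost _ _)

/-- An edge inside `B` is irrelevant once `B` is explored. In particular the edge just used is
independent of what follows, as `lintegral_expPi_argmin` requires. -/
lemma forestSum_dependsOn (B : Finset V) (c : V → ℝ≥0∞) (z : ℝ≥0∞) {a b : V} (ha : a ∈ B)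
    (hb : b ∈ B) : DependsOn (forestSum B c z) {e | e ≠ s(a, b)} := by
  intro w w' h
  have hc : ∀ {x : V} {l : List V}, (∀ v ∈ l, v ∉ B) → chainCost w x l = chainCost w' x l := by
    intro x l hl
    refine chainCost_congr' (B : Set V) (fun u v hv => h _ ?_) (by simpa using hl)
    intro he
    rcases Sym2.eq_iff.1 he with ⟨-, rfl⟩ | ⟨-, rfl⟩
    · exact hv (by simpa using hb)
    · exact hv (by simpa using ha)
  have hg : ∀ j x l, IsGeo B w j x l ↔ IsGeo B w' j x l := by
    intro j x l
    constructor
    · rintro ⟨h1, h2⟩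
      exact ⟨h1, fun a' l' h' => by rw [← hc h1.2.1, ← hc h'.2.1]; exact h2 _ _ h'⟩
    · rintro ⟨h1, h2⟩
      exact ⟨h1, fun a' l' h' => by rw [hc h1.2.1, hc h'.2.1]; exact h2 _ _ h'⟩
  unfold forestSum
  refine Finset.sum_congr rfl fun j _ => iSup_congr fun p => ?_
  by_cases hp : IsGeo B w j p.1 p.2
  · rw [Set.indicator_of_mem (by exact hp), Set.indicator_of_mem (by exact (hg _ _ _).1 hp)]
  · rw [Set.indicator_of_notMem (by exact hp),
      Set.indicator_of_notMem (by exact fun h => hp ((hg _ _ _).2 h))]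

/-- When every vertex is a source, all geodesics are trivial. -/
lemma forestSum_univ_le (c : V → ℝ≥0∞) (z : ℝ≥0∞) (w : Sym2 V → ℝ) :
    forestSum Finset.univ c z w ≤ ∑ j, c j := by
  refine Finset.sum_le_sum fun j _ => iSup_le fun p => ?_
  by_cases h : IsGeo Finset.univ w j p.1 p.2
  · rw [Set.indicator_of_mem (by exact h)]
    obtain ⟨⟨-, h1, h2⟩, -⟩ := h
    have : p.2 = [] := List.eq_nil_iff_forall_not_mem.2 fun v hv => h1 v hv (by simp)
    rw [this] at h2 ⊢
    simp at h2
    simp [h2]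
  · rw [Set.indicator_of_notMem (by exact h)]
    exact zero_le

/-- Almost surely no two coordinates are equal, so the lightest cut edge is unique. -/
lemma expPi_ne_ae {ι : Type*} [Fintype ι] [DecidableEq ι] {r : ℝ} (hr : 0 < r) :
    ∀ᵐ x ∂(Measure.pi fun _ : ι => expMeasure r), ∀ i j, i ≠ j → x i ≠ x j := by
  have := isProb_exp hr
  rw [eventually_countable_forall]; intro i
  rw [eventually_countable_forall]; intro j
  by_cases hij : i = j
  · simp [hij]
  have hms : MeasurableSet {x : ι → ℝ | x i = x j} :=
    measurableSet_eq_fun (by fun_prop) (by fun_prop)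
  have h0 : (Measure.pi fun _ : ι => expMeasure r) {x | x i = x j} = 0 := by
    rw [← lintegral_indicator_one hms, lintegral_pi_resample _ i (measurable_one.indicator hms)]
    refine (lintegral_congr fun x => ?_).trans lintegral_zero
    have hac : expMeasure r ≪ volume := withDensity_absolutelyContinuous _ _
    have h1 : ∀ᵐ t ∂expMeasure r, t ≠ x j := hac.ae_le (show ∀ᵐ t : ℝ ∂volume, t ≠ x j by simp [ae_iff])
    refine (lintegral_congr_ae ?_).trans lintegral_zero
    filter_upwards [h1] with t ht
    rw [Set.indicator_of_notMem]
    simpa [Function.update_of_ne (Ne.symm hij)] using ht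
  filter_upwards [measure_eq_zero_iff_ae_notMem.1 h0] with x hx _
  exact hx

/-- The expected forest sum: each new vertex attaches to a uniformly chosen explored vertex, so a
step from `m` to `m + 1` explored vertices multiplies the expectation by `1 + z / m`. -/
lemma lintegral_forestSum_le {r : ℝ} (hr : 0 < r) (z : ℝ≥0∞) (d : ℕ) :
    ∀ (B : Finset V) (c : V → ℝ≥0∞), B.Nonempty → Bᶜ.card = d →
    ∫⁻ w, forestSum B c z w ∂(Measure.pi fun _ : Sym2 V => expMeasure r)
      ≤ (∏ m ∈ Finset.Ico B.card (Fintype.card V), (1 + z / m)) * ∑ a ∈ B, c a := by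
  have := isProb_exp hr
  induction d with
  | zero =>
    intro B c hB hd
    have hBu : B = Finset.univ := by simpa using hd
    subst hBu
    simp only [Finset.card_univ, Finset.Ico_self, Finset.prod_empty, one_mul]
    calc _ ≤ ∫⁻ w, (∑ j, c j) ∂(Measure.pi fun _ : Sym2 V => expMeasure r) :=
          lintegral_mono fun w => forestSum_univ_le c z w
      _ = _ := by simp
  | succ d ih =>
    intro B c hB hd
    have hlt : B.card < Fintype.card V := by
      have := Finset.card_add_card_compl B
      omega
    have hBpos : 0 < B.card := hB.card_pos
    have hE : (cutEdges B).card = B.card * (d + 1) := by rw [card_cutEdges, hd]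
    let K : V × V → (Sym2 V → ℝ) → ℝ≥0∞ := fun p w =>
      if ∀ e ∈ (cutEdges B).erase s(p.1, p.2), w s(p.1, p.2) < w e then
        forestSum (insert p.2 B) (Function.update c p.2 (z * c p.1)) z
          (fun e => if e ∈ cutEdges B then w e - w s(p.1, p.2) else w e) else 0
    have hpt : ∀ᵐ w ∂(Measure.pi fun _ : Sym2 V => expMeasure r),
        forestSum B c z w ≤ ∑ p ∈ B ×ˢ Bᶜ, K p w := by
      filter_upwards [expPi_pos_ae (ι := Sym2 V) hr, expPi_ne_ae (ι := Sym2 V) hr] with w hw hne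
      have hEne : (cutEdges B).Nonempty := by
        rw [← Finset.card_pos, hE]; positivity
      obtain ⟨e, heE, he⟩ := Finset.exists_min_image (cutEdges B) w hEne
      obtain ⟨p, hp, rfl⟩ := Finset.mem_image.1 heE
      have hp' := hp
      simp only [Finset.mem_product, Finset.mem_compl] at hp'
      have hmin : ∀ e ∈ (cutEdges B).erase s(p.1, p.2), w s(p.1, p.2) < w e := fun e' he' =>
        lt_of_le_of_ne (he e' (Finset.mem_of_mem_erase he'))
          (hne _ _ (Finset.ne_of_mem_erase he').symm)
      have hs : K p w ≤ ∑ q ∈ B ×ˢ Bᶜ, K q w :=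
        Finset.single_le_sum (f := fun q => K q w) (fun i _ => zero_le) hp
      refine le_trans ?_ hs
      simp only [K]
      rw [if_pos hmin]
      exact forestSum_step hw hp'.1 hp'.2 hmin c z
    have hKm : ∀ p ∈ B ×ˢ Bᶜ, ∫⁻ w, K p w ∂(Measure.pi fun _ : Sym2 V => expMeasure r)
        ≤ ((cutEdges B).card : ℝ≥0∞)⁻¹ *
          ((∏ m ∈ Finset.Ico (B.card + 1) (Fintype.card V), (1 + z / m)) *
            (∑ a ∈ B, c a + z * c p.1)) := by
      rintro ⟨a, b⟩ hp
      simp only [Finset.mem_product, Finset.mem_compl] at hp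
      obtain ⟨ha, hb⟩ := hp
      simp only [K]
      rw [lintegral_expPi_argmin hr (cutEdges B) (mem_cutEdges ha hb)
        (measurable_forestSum _ _ _)
        (forestSum_dependsOn _ _ _ (by simp [ha]) (by simp))]
      gcongr
      refine (ih (insert b B) _ (by simp) ?_).trans (le_of_eq ?_)
      · have h1 := Finset.card_add_card_compl B
        have h2 := Finset.card_add_card_compl (insert b B)
        rw [Finset.card_insert_of_notMem hb] at h2
        omega
      · rw [Finset.card_insert_of_notMem hb, Finset.sum_insert hb, Function.update_self]
        have hsum : ∑ x ∈ B, Function.update c b (z * c a) x = ∑ x ∈ B, c x :=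
          Finset.sum_congr rfl fun x hx => Function.update_of_ne (by rintro rfl; exact hb hx) _ _
        rw [hsum, add_comm (z * c a)]
    have hKmeas : ∀ p ∈ B ×ˢ Bᶜ, Measurable (K p) := by
      intro p _
      have hms : MeasurableSet {x : Sym2 V → ℝ | ∀ i ∈ (cutEdges B).erase s(p.1, p.2),
          x s(p.1, p.2) < x i} := by
        have : {x : Sym2 V → ℝ | ∀ i ∈ (cutEdges B).erase s(p.1, p.2), x s(p.1, p.2) < x i}
            = ⋂ i ∈ (cutEdges B).erase s(p.1, p.2), {x | x s(p.1, p.2) < x i} := by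
          ext; simp
        rw [this]
        exact Finset.measurableSet_biInter _ fun i _ => measurableSet_lt (by fun_prop) (by fun_prop)
      refine Measurable.ite hms ((measurable_forestSum _ _ _).comp
        (measurable_pi_lambda _ fun i => ?_)) measurable_const
      split_ifs <;> fun_prop
    refine (lintegral_mono_ae hpt).trans ?_
    rw [lintegral_finsetSum _ hKmeas]
    refine (Finset.sum_le_sum hKm).trans ?_
    rw [← Finset.mul_sum, ← Finset.mul_sum, Finset.sum_product_right]
    simp only [Finset.sum_const, hd, Finset.sum_add_distrib, ← Finset.mul_sum]
    rw [Finset.prod_eq_prod_Ico_succ_bot hlt, hE]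
    set P := ∏ m ∈ Finset.Ico (B.card + 1) (Fintype.card V), (1 + z / (m : ℝ≥0∞))
    set S := ∑ a ∈ B, c a
    have e1 : ((B.card * (d + 1) : ℕ) : ℝ≥0∞)⁻¹ * (P * ((d + 1) • (B.card • S) + (d + 1) • (z * S)))
        = P * S * (((B.card : ℝ≥0∞)⁻¹ * B.card + z * (B.card : ℝ≥0∞)⁻¹) *
          (((d + 1 : ℕ) : ℝ≥0∞)⁻¹ * ((d + 1 : ℕ) : ℝ≥0∞))) := by
      rw [Nat.cast_mul, ENNReal.mul_inv (by simp) (by simp)]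
      simp only [nsmul_eq_mul]
      ring
    have e2 : ((d + 1 : ℕ) : ℝ≥0∞)⁻¹ * ((d + 1 : ℕ) : ℝ≥0∞) = 1 :=
      ENNReal.inv_mul_cancel (by exact_mod_cast Nat.succ_ne_zero d) (ENNReal.natCast_ne_top _)
    have e3 : (B.card : ℝ≥0∞)⁻¹ * B.card = 1 :=
      ENNReal.inv_mul_cancel (by exact_mod_cast hBpos.ne') (ENNReal.natCast_ne_top _)
    rw [e2, e3] at e1
    refine le_of_eq ?_
    trans P * S * ((1 + z * (B.card : ℝ≥0∞)⁻¹) * 1)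
    · rw [← e1]
      congr 2
      simp only [nsmul_eq_mul]
      ring
    · rw [div_eq_mul_inv]; ring

end Exploration

/-! ### Upper tail -/

section Upper

lemma walkWeight_eq_chainCost {n : ℕ} (w : Sym2 (Fin n) → ℝ) {i j : Fin n}
    (p : (Kn n).Walk i j) : walkWeight w p = chainCost w i p.support.tail := by
  induction p with
  | nil => simp [walkWeight, chainCost]
  | @cons u v x h p ih =>
    rw [SimpleGraph.Walk.support_cons, List.tail_cons, ← SimpleGraph.Walk.cons_tail_support]
    simp only [chainCost]
    rw [← ih]
    simp [walkWeight]

lemma walkWeight_append {n : ℕ} (w : Sym2 (Fin n) → ℝ) {i j k : Fin n}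
    (p : (Kn n).Walk i j) (q : (Kn n).Walk j k) :
    walkWeight w (p.append q) = walkWeight w p + walkWeight w q := by
  simp [walkWeight, SimpleGraph.Walk.edges_append]

lemma walkWeight_nonneg {n : ℕ} {w : Sym2 (Fin n) → ℝ} (hw : ∀ e, 0 < w e) {i j : Fin n}
    (p : (Kn n).Walk i j) : 0 ≤ walkWeight w p := by
  rw [walkWeight_eq_chainCost]; exact chainCost_nonneg hw _ _

/-- Loop erasure: a vertex sequence, possibly with repetitions, can be shortened to a path with
the same endpoints and no larger weight. -/
lemma exists_path_le_chainCost {n : ℕ} {w : Sym2 (Fin n) → ℝ} (hw : ∀ e, 0 < w e) (l : List (Fin n))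
    (a j : Fin n) (hj : l.getLastD a = j) :
    ∃ q : (Kn n).Walk a j, q.IsPath ∧ walkWeight w q ≤ chainCost w a l := by
  induction l generalizing a with
  | nil =>
    obtain rfl : a = j := by simpa using hj
    exact ⟨SimpleGraph.Walk.nil, by simp, by simp [walkWeight, chainCost]⟩
  | cons b l ih =>
    rw [List.getLastD_cons] at hj
    obtain ⟨q, hq, hc⟩ := ih b hj
    simp only [chainCost]
    by_cases ha : a ∈ q.support
    · refine ⟨q.dropUntil a ha, hq.dropUntil ha, ?_⟩
      have := walkWeight_append w (q.takeUntil a ha) (q.dropUntil a ha)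
      rw [SimpleGraph.Walk.take_spec] at this
      linarith [walkWeight_nonneg hw (q.takeUntil a ha), hw s(a, b)]
    · have hab : (Kn n).Adj a b := by
        have : a ≠ b := by rintro rfl; exact ha q.start_mem_support
        simpa [Kn] using this
      refine ⟨SimpleGraph.Walk.cons hab q, hq.cons ha, ?_⟩
      have : walkWeight w (SimpleGraph.Walk.cons hab q) = w s(a, b) + walkWeight w q := by
        simp [walkWeight]
      linarith

lemma getLastD_support_tail {n : ℕ} {i j : Fin n} (p : (Kn n).Walk i j) :
    p.support.tail.getLastD i = j := by
  induction p with
  | nil => simp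
  | @cons u v x h p ih =>
    rw [SimpleGraph.Walk.support_cons, List.tail_cons, ← SimpleGraph.Walk.cons_tail_support,
      List.getLastD_cons]
    exact ih

/-- Minimality among paths implies minimality among all vertex sequences, by loop erasure. -/
lemma isGeo_of_isMinPath {n : ℕ} {w : Sym2 (Fin n) → ℝ} (hw : ∀ e, 0 < w e) {i j : Fin n}
    {p : (Kn n).Walk i j} (hp : IsMinPath w p) : IsGeo {i} w j i p.support.tail := by
  refine ⟨⟨by simp, ?_, ?_⟩, ?_⟩
  · intro v hv h
    have h2 := hp.1.support_nodup
    rw [← SimpleGraph.Walk.cons_tail_support] at h2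
    simp only [Finset.mem_singleton] at h
    subst h
    exact (List.nodup_cons.1 h2).1 hv
  · exact getLastD_support_tail p
  · rintro a' l' ⟨ha, -, hl⟩
    simp only [Finset.mem_singleton] at ha
    subst ha
    obtain ⟨q, hq, hc⟩ := exists_path_le_chainCost hw l' a' j hl
    rw [← walkWeight_eq_chainCost]
    exact (hp.2 q hq).trans hc

lemma pow_le_forestSum {n : ℕ} {w : Sym2 (Fin n) → ℝ} (hw : ∀ e, 0 < w e) {i j : Fin n}
    {p : (Kn n).Walk i j} (hp : IsMinPath w p) (z : ℝ≥0∞) :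
    z ^ p.length ≤ forestSum {i} 1 z w := by
  refine le_trans ?_ (Finset.single_le_sum (fun _ _ => zero_le) (Finset.mem_univ j))
  refine le_trans ?_ (le_iSup _ (i, p.support.tail))
  rw [Set.indicator_of_mem (by exact isGeo_of_isMinPath hw hp)]
  simp

/-- The supremum defining `maxMinLen` is over a nonempty bounded set of naturals, hence attained. -/
lemma exists_isMinPath_maxMinLen {n : ℕ} (hn : 0 < n) (w : Sym2 (Fin n) → ℝ) :
    ∃ (i j : Fin n) (p : (Kn n).Walk i j), IsMinPath w p ∧ p.length = maxMinLen w := by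
  refine Nat.sSup_mem (s := {L : ℕ | ∃ (i j : Fin n) (p : (Kn n).Walk i j),
    IsMinPath w p ∧ p.length = L}) ?_ ?_
  · refine ⟨0, ⟨0, hn⟩, ⟨0, hn⟩, SimpleGraph.Walk.nil, ⟨by simp, fun q hq => ?_⟩, rfl⟩
    rw [SimpleGraph.Walk.isPath_iff_eq_nil] at hq
    rw [hq]
  · refine ⟨n, ?_⟩
    rintro L ⟨i, j, p, hp, rfl⟩
    simpa using hp.1.length_lt.le

lemma le_maxMinLen {n : ℕ} {w : Sym2 (Fin n) → ℝ} {i j : Fin n}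
    {p : (Kn n).Walk i j} (hp : IsMinPath w p) : p.length ≤ maxMinLen w := by
  refine le_csSup ⟨n, ?_⟩ ⟨i, j, p, hp, rfl⟩
  rintro L ⟨i, j, p, hp, rfl⟩
  simpa using hp.1.length_lt.le

/-- Follows from `1 + y ≤ exp y` and `∑_{m < n} 1 / m ≤ 1 + log n`. -/
lemma prod_one_add_div_le {α : ℝ} (hα : 0 < α) {n : ℕ} (hn : 0 < n) :
    ∏ m ∈ Finset.Ico 1 n, (1 + ENNReal.ofReal α / (m : ℝ≥0∞)) ≤
      ENNReal.ofReal (exp (α * (1 + Real.log n))) := by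
  have h1 : ∏ m ∈ Finset.Ico 1 n, (1 + ENNReal.ofReal α / (m : ℝ≥0∞))
      = ENNReal.ofReal (∏ m ∈ Finset.Ico 1 n, (1 + α / (m : ℝ))) := by
    rw [ENNReal.ofReal_prod_of_nonneg (fun m _ => by positivity)]
    refine Finset.prod_congr rfl fun m hm => ?_
    have hm : 0 < (m : ℝ) := by exact_mod_cast (Finset.mem_Ico.1 hm).1
    rw [ENNReal.ofReal_add zero_le_one (by positivity), ENNReal.ofReal_one,
      ENNReal.ofReal_div_of_pos hm, ENNReal.ofReal_natCast]
  rw [h1]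
  refine ENNReal.ofReal_le_ofReal ?_
  calc ∏ m ∈ Finset.Ico 1 n, (1 + α / (m : ℝ))
      ≤ ∏ m ∈ Finset.Ico 1 n, exp (α / (m : ℝ)) := by
        refine Finset.prod_le_prod (fun m _ => by positivity) fun m _ => ?_
        linarith [add_one_le_exp (α / (m : ℝ))]
    _ = exp (α * ∑ m ∈ Finset.Ico 1 n, (m : ℝ)⁻¹) := by
        rw [← exp_sum, Finset.mul_sum]; rfl
    _ ≤ _ := by
        refine exp_le_exp.2 (mul_le_mul_of_nonneg_left ?_ hα.le)
        refine le_trans ?_ (harmonic_le_one_add_log n)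
        rw [harmonic_eq_sum_Icc]
        push_cast
        refine Finset.sum_le_sum_of_subset_of_nonneg ?_ fun _ _ _ => by positivity
        intro m hm
        simp only [Finset.mem_Ico, Finset.mem_Icc] at hm ⊢
        omega

/-- Upper tail of the maximal hopcount, for every real slack `s`. -/
lemma upper_tail {α : ℝ} (hα : 1 < α) (heq : α * Real.log α - α = 1) {n : ℕ} (hn : 0 < n) (s : ℝ) :
    edgeSpace n {w | α * Real.log n + s < (maxMinLen w : ℝ)} ≤
      ENNReal.ofReal (exp α * exp (-(s * Real.log α))) := by
  have hn' : (0 : ℝ) < n := by exact_mod_cast hn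
  have hr : (0 : ℝ) < 1 / n := by positivity
  have hα0 : 0 < α := by linarith
  set μ := edgeSpace n with hμ
  have hμ' : μ = Measure.pi fun _ : Sym2 (Fin n) => expMeasure (1 / (n : ℝ)) := rfl
  set K := α * Real.log n + s with hK
  set z := ENNReal.ofReal α
  have hsub : ∀ᵐ w ∂μ, α * Real.log n + s < (maxMinLen w : ℝ) →
      w ∈ ⋃ i : Fin n, {w | ENNReal.ofReal (α ^ K) ≤ forestSum {i} 1 z w} := by
    rw [hμ']
    filter_upwards [expPi_pos_ae (ι := Sym2 (Fin n)) hr] with w hw hlt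
    obtain ⟨i, j, p, hp, hl⟩ := exists_isMinPath_maxMinLen hn w
    refine Set.mem_iUnion.2 ⟨i, ?_⟩
    refine le_trans ?_ (pow_le_forestSum hw hp z)
    rw [← ENNReal.ofReal_pow hα0.le]
    refine ENNReal.ofReal_le_ofReal ?_
    rw [← Real.rpow_natCast, hl]
    exact Real.rpow_le_rpow_of_exponent_le hα.le hlt.le
  have hαK : 0 < α ^ K := Real.rpow_pos_of_pos hα0 _
  calc μ {w | K < (maxMinLen w : ℝ)}
      ≤ μ (⋃ i : Fin n, {w | ENNReal.ofReal (α ^ K) ≤ forestSum {i} 1 z w}) :=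
        measure_mono_ae hsub
    _ ≤ ∑ i : Fin n, μ {w | ENNReal.ofReal (α ^ K) ≤ forestSum {i} 1 z w} :=
        measure_iUnion_fintype_le _ _
    _ ≤ ∑ i : Fin n, ENNReal.ofReal (exp (α * (1 + Real.log n))) / ENNReal.ofReal (α ^ K) := by
        refine Finset.sum_le_sum fun i _ => ?_
        rw [ENNReal.le_div_iff_mul_le (Or.inl (by simpa using hαK)) (Or.inl ENNReal.ofReal_ne_top),
          mul_comm]
        -- Markov's inequality for the generating function at `z = α`
        refine (mul_meas_ge_le_lintegral (measurable_forestSum _ _ _) _).trans ?_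
        rw [hμ']
        refine (lintegral_forestSum_le hr z _ {i} 1 (by simp) rfl).trans ?_
        simpa using prod_one_add_div_le hα0 hn
    _ = _ := by
        rw [Finset.sum_const, Finset.card_univ, Fintype.card_fin, nsmul_eq_mul,
          ← ENNReal.ofReal_div_of_pos hαK, ← ENNReal.ofReal_natCast n,
          ← ENNReal.ofReal_mul hn'.le]
        congr 1
        rw [Real.rpow_def_of_pos hα0, ← exp_sub, ← exp_add]
        nth_rewrite 1 [← Real.exp_log hn']
        rw [← exp_add]
        congr 1
        rw [hK]
        have : Real.log α * α = 1 + α := by linarith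
        linear_combination (-Real.log n) * this

end Upper

/-! ### Paths, detours and overlaps -/

section Comb
variable {V : Type*} [DecidableEq V]

/-- Weight of the vertex sequence `v a, v (a + 1), …, v b`. -/
def segW (w : Sym2 V → ℝ) (v : ℕ → V) (a b : ℕ) : ℝ := ∑ t ∈ Finset.Ico a b, w s(v t, v (t + 1))

/-- Edges of the vertex sequence `v a, v (a + 1), …, v b`. -/
def segE (v : ℕ → V) (a b : ℕ) : Finset (Sym2 V) := (Finset.Ico a b).image fun t => s(v t, v (t + 1))

lemma mem_segE {v : ℕ → V} {a b : ℕ} {e : Sym2 V} :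
    e ∈ segE v a b ↔ ∃ t, a ≤ t ∧ t < b ∧ s(v t, v (t + 1)) = e := by
  simp [segE, and_assoc]

lemma edge_inj {v : ℕ → V} {k : ℕ} (hv : Set.InjOn v (Set.Iic k)) {t t' : ℕ} (ht : t < k)
    (ht' : t' < k) (h : s(v t, v (t + 1)) = s(v t', v (t' + 1))) : t = t' := by
  rw [Sym2.eq_iff] at h
  rcases h with ⟨h, -⟩ | ⟨h1, h2⟩
  · exact hv (Set.mem_Iic.2 ht.le) (Set.mem_Iic.2 ht'.le) h
  · have := hv (Set.mem_Iic.2 ht.le) (Set.mem_Iic.2 ht') h1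
    have := hv (Set.mem_Iic.2 ht) (Set.mem_Iic.2 ht'.le) h2
    omega

lemma edge_injOn {v : ℕ → V} {k : ℕ} (hv : Set.InjOn v (Set.Iic k)) {a b : ℕ} (hb : b ≤ k) :
    Set.InjOn (fun t => s(v t, v (t + 1))) (Finset.Ico a b : Finset ℕ) := by
  intro t ht t' ht' h
  simp only [Finset.coe_Ico, Set.mem_Ico] at ht ht'
  exact edge_inj hv (by omega) (by omega) h

lemma segW_eq_sum {v : ℕ → V} {k : ℕ} (hv : Set.InjOn v (Set.Iic k)) {a b : ℕ} (hb : b ≤ k)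
    (w : Sym2 V → ℝ) : segW w v a b = ∑ e ∈ segE v a b, w e := by
  rw [segE, Finset.sum_image (edge_injOn hv hb)]; rfl

lemma card_segE {v : ℕ → V} {k : ℕ} (hv : Set.InjOn v (Set.Iic k)) {a b : ℕ} (hb : b ≤ k) :
    (segE v a b).card = b - a := by
  rw [segE, Finset.card_image_of_injOn (edge_injOn hv hb), Nat.card_Ico]

omit [DecidableEq V] in
lemma segW_add (w : Sym2 V → ℝ) (v : ℕ → V) {a b c : ℕ} (hab : a ≤ b) (hbc : b ≤ c) :
    segW w v a b + segW w v b c = segW w v a c := by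
  simpa [segW] using Finset.sum_Ico_consecutive _ hab hbc

omit [DecidableEq V] in
lemma segW_nonneg {w : Sym2 V → ℝ} (hw : ∀ e, 0 ≤ w e) (v : ℕ → V) (a b : ℕ) :
    0 ≤ segW w v a b := Finset.sum_nonneg fun _ _ => hw _

omit [DecidableEq V] in
lemma segW_shift (w : Sym2 V → ℝ) (v : ℕ → V) (a l : ℕ) :
    segW w (fun t => v (a + t)) 0 l = segW w v a (a + l) := by
  simp only [segW, Finset.sum_Ico_eq_sum_range, Nat.sub_zero, Nat.add_sub_cancel_left, zero_add]
  rfl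

omit [DecidableEq V] in
lemma segW_congr {w : Sym2 V → ℝ} {u v : ℕ → V} {a b : ℕ} (h : ∀ t, a ≤ t → t ≤ b → u t = v t) :
    segW w u a b = segW w v a b := by
  refine Finset.sum_congr rfl fun t ht => ?_
  have := Finset.mem_Ico.1 ht
  rw [h t (by omega) (by omega), h (t + 1) (by omega) (by omega)]

omit [DecidableEq V] in
lemma segW_reverse (w : Sym2 V → ℝ) (v : ℕ → V) (p l : ℕ) :
    segW w (fun t => v (p + l - t)) 0 l = segW w v p (p + l) := by
  rw [← segW_shift]
  simp only [segW, Finset.sum_Ico_eq_sum_range, Nat.sub_zero, zero_add]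
  rw [← Finset.sum_range_reflect]
  refine Finset.sum_congr rfl fun t ht => ?_
  have := Finset.mem_range.1 ht
  rw [show p + l - (l - 1 - t) = p + (t + 1) by omega,
    show p + l - (l - 1 - t + 1) = p + t by omega, Sym2.eq_swap]

/-- A detour of the path `v 0, …, v k`: a path of `l ≥ 1` edges, none of them an edge of `v`, that
joins two vertices of `v`. -/
def IsDetour (v : ℕ → V) (k : ℕ) (r : ℕ → V) (l : ℕ) : Prop :=
  0 < l ∧ Set.InjOn r (Set.Iic l) ∧ (∃ p ≤ k, r 0 = v p) ∧ (∃ q ≤ k, r l = v q) ∧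
    ∀ t < l, s(r t, r (t + 1)) ∉ segE v 0 k

lemma exists_of_mem_segE {v : ℕ → V} {k : ℕ} {x y : V} (h : s(x, y) ∈ segE v 0 k) :
    (∃ p ≤ k, x = v p) ∧ ∃ q ≤ k, y = v q := by
  obtain ⟨t, -, ht, h⟩ := mem_segE.1 h
  rcases Sym2.eq_iff.1 h with ⟨h1, h2⟩ | ⟨h1, h2⟩
  · exact ⟨⟨t, ht.le, h1.symm⟩, ⟨t + 1, ht, h2.symm⟩⟩
  · exact ⟨⟨t + 1, ht, h2.symm⟩, ⟨t, ht.le, h1.symm⟩⟩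

/-- If `v` has no detour of weight at most `x`, then a path of weight at most `x` between vertices
of `v` uses edges of `v` only: around another edge, the stretch between the nearest visits to `v`
would be a light detour. -/
lemma edges_mem_of_no_detour {w : Sym2 V → ℝ} (hw : ∀ e, 0 ≤ w e) {v : ℕ → V} {k : ℕ} {x : ℝ}
    (hno : ∀ r l, IsDetour v k r l → x < segW w r 0 l) {r : ℕ → V} {l : ℕ}
    (hr : Set.InjOn r (Set.Iic l)) (h0 : ∃ p ≤ k, r 0 = v p) (hl : ∃ q ≤ k, r l = v q)
    (hx : segW w r 0 l ≤ x) : ∀ t < l, s(r t, r (t + 1)) ∈ segE v 0 k := by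
  classical
  by_contra! hcon
  obtain ⟨t₀, ht₀, hne⟩ := hcon
  -- `a`, `b`: last visit to `v` up to time `t₀` and first visit after it
  let P : ℕ → Prop := fun t => ∃ p ≤ k, r t = v p
  set a := Nat.findGreatest P t₀ with ha
  have hPa : P a := Nat.findGreatest_spec (P := P) (Nat.zero_le t₀) h0
  have hat : a ≤ t₀ := Nat.findGreatest_le t₀
  have hamax : ∀ t, a < t → t ≤ t₀ → ¬ P t := fun t h1 h2 =>
    Nat.findGreatest_is_greatest h1 h2
  have hex : ∃ b, t₀ < b ∧ P b := ⟨l, ht₀, hl⟩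
  set b := Nat.find hex with hb
  obtain ⟨htb, hPb⟩ := Nat.find_spec hex
  have hbl : b ≤ l := Nat.find_min' hex ⟨ht₀, hl⟩
  have hbmin : ∀ t, t₀ < t → t < b → ¬ P t := fun t h1 h2 h3 => Nat.find_min hex h2 ⟨h1, h3⟩
  have hdet : IsDetour v k (fun t => r (a + t)) (b - a) := by
    refine ⟨by omega, ?_, hPa, ?_, ?_⟩
    · intro s hs t ht h
      simp only [Set.mem_Iic] at hs ht
      have := hr (Set.mem_Iic.2 (by omega)) (Set.mem_Iic.2 (by omega)) h
      omega
    · have : a + (b - a) = b := by omega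
      simp only [this]; exact hPb
    · intro t ht hmem
      by_cases h : a + t = t₀
      · exact hne (by rw [← h]; exact hmem)
      obtain ⟨h1, h2⟩ := exists_of_mem_segE hmem
      rcases lt_or_gt_of_ne h with h | h
      · exact hamax (a + t + 1) (by omega) (by omega) h2
      · exact hbmin (a + t) h (by omega) h1
  have h1 := hno _ _ hdet
  rw [segW_shift, show a + (b - a) = b by omega] at h1
  have h2 := segW_add w r (Nat.zero_le a) (show a ≤ b by omega)
  have h3 := segW_add w r (Nat.zero_le b) hbl
  linarith [segW_nonneg hw r 0 a, segW_nonneg hw r b l]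

/-- An injective walk on `ℕ` with steps `±1` cannot turn back, so it is monotone. -/
lemma unit_steps {idx : ℕ → ℕ} {l : ℕ} (hinj : Set.InjOn idx (Set.Iic l))
    (hstep : ∀ t < l, idx (t + 1) = idx t + 1 ∨ idx t = idx (t + 1) + 1) :
    (∀ t ≤ l, idx t = idx 0 + t) ∨ (∀ t ≤ l, idx t + t = idx 0) := by
  induction l with
  | zero => left; intro t ht; simp [Nat.le_zero.1 ht]
  | succ l ih =>
    have hne : 1 ≤ l → idx (l - 1) ≠ idx (l + 1) := fun hl h => by
      have := hinj (Set.mem_Iic.2 (by omega)) (Set.mem_Iic.2 (by omega)) h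
      omega
    rcases Nat.eq_zero_or_pos l with rfl | hl
    · rcases hstep 0 (by omega) with h | h
      · left; intro t ht
        obtain rfl | rfl : t = 0 ∨ t = 1 := by omega
        · rfl
        · exact h
      · right; intro t ht
        obtain rfl | rfl : t = 0 ∨ t = 1 := by omega
        · rfl
        · exact h.symm
    have hne := hne hl
    rcases ih (hinj.mono fun t ht => Set.mem_Iic.2 ((Set.mem_Iic.1 ht).trans (Nat.le_succ l)))
      (fun t ht => hstep t (by omega)) with h | h
    · left
      have h1 := h l le_rfl
      have h2 := h (l - 1) (by omega)
      have h3 := hstep l (by omega)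
      intro t ht
      rcases Nat.lt_or_ge l t with h4 | h4
      · obtain rfl : t = l + 1 := by omega
        omega
      · exact h t h4
    · right
      have h1 := h l le_rfl
      have h2 := h (l - 1) (by omega)
      have h3 := hstep l (by omega)
      intro t ht
      rcases Nat.lt_or_ge l t with h4 | h4
      · obtain rfl : t = l + 1 := by omega
        omega
      · exact h t h4

/-- A path all of whose edges lie on `v` is a segment of `v`, in one of the two directions. -/
lemma eq_segment {v : ℕ → V} {k : ℕ} (hv : Set.InjOn v (Set.Iic k)) {r : ℕ → V} {l : ℕ}
    (hl : 0 < l) (hr : Set.InjOn r (Set.Iic l)) (h : ∀ t < l, s(r t, r (t + 1)) ∈ segE v 0 k) :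
    ∃ p, p + l ≤ k ∧ ((∀ t ≤ l, r t = v (p + t)) ∨ (∀ t ≤ l, r t = v (p + l - t))) := by
  have hex : ∀ t, ∃ p, t ≤ l → p ≤ k ∧ r t = v p := by
    intro t
    rcases lt_or_ge t l with ht | ht
    · obtain ⟨⟨p, h1, h2⟩, -⟩ := exists_of_mem_segE (h t ht)
      exact ⟨p, fun _ => ⟨h1, h2⟩⟩
    · obtain ⟨-, ⟨p, h1, h2⟩⟩ := exists_of_mem_segE (h (l - 1) (by omega))
      rw [show l - 1 + 1 = l by omega] at h2
      exact ⟨p, fun h3 => ⟨h1, by rw [← h2, le_antisymm h3 ht]⟩⟩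
  choose idx hpos using hex
  have hposi : Set.InjOn idx (Set.Iic l) := by
    intro s hs t ht hst
    refine hr hs ht ?_
    rw [(hpos s hs).2, (hpos t ht).2, hst]
  have hstep : ∀ t < l, idx (t + 1) = idx t + 1 ∨ idx t = idx (t + 1) + 1 := by
    intro t ht
    obtain ⟨a, -, ha, h1⟩ := mem_segE.1 (h t ht)
    obtain ⟨h2, h3⟩ := hpos t ht.le
    obtain ⟨h4, h5⟩ := hpos (t + 1) ht
    rw [h3, h5, Sym2.eq_iff] at h1
    rcases h1 with ⟨h6, h7⟩ | ⟨h6, h7⟩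
    · have := hv (Set.mem_Iic.2 ha.le) (Set.mem_Iic.2 h2) h6
      have := hv (Set.mem_Iic.2 ha) (Set.mem_Iic.2 h4) h7
      omega
    · have := hv (Set.mem_Iic.2 ha.le) (Set.mem_Iic.2 h4) h6
      have := hv (Set.mem_Iic.2 ha) (Set.mem_Iic.2 h2) h7
      omega
  rcases unit_steps hposi hstep with h | h
  · refine ⟨idx 0, ?_, Or.inl fun t ht => ?_⟩
    · have := h l le_rfl
      have := (hpos l le_rfl).1
      omega
    · rw [← h t ht]; exact (hpos t ht).2
  · refine ⟨idx l, ?_, Or.inr fun t ht => ?_⟩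
    · have := h l le_rfl
      have := (hpos 0 (by omega)).1
      omega
    · have h1 := h l le_rfl
      have h2 := h t ht
      rw [(hpos t ht).2]; congr 1; omega

/-- `u` and `v` share exactly a stretch of `j ≥ 1` edges, at position `s` in `u` and `p` in `v`;
`o` records whether `u` traverses it in the direction of `v`. -/
def Overlap (k : ℕ) (v u : ℕ → V) (s j p : ℕ) (o : Bool) : Prop :=
  0 < j ∧ s + j ≤ k ∧ p + j ≤ k ∧
    (∀ t ≤ j, u (s + t) = if o then v (p + t) else v (p + j - t)) ∧
    Disjoint (segE u 0 s ∪ segE u (s + j) k) (segE v 0 k)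

/-- If `v` has no light detour and `u` is light, then either `u` and `v` have no common edge, or
they meet in one contiguous stretch. -/
lemma disjoint_or_overlap {w : Sym2 V → ℝ} (hw : ∀ e, 0 ≤ w e) {v u : ℕ → V} {k : ℕ} {x : ℝ}
    (hv : Set.InjOn v (Set.Iic k)) (hu : Set.InjOn u (Set.Iic k))
    (hno : ∀ r l, IsDetour v k r l → x < segW w r 0 l) (hx : segW w u 0 k ≤ x) :
    Disjoint (segE u 0 k) (segE v 0 k) ∨ ∃ s j p o, Overlap k v u s j p o := by
  classical
  by_cases hd : Disjoint (segE u 0 k) (segE v 0 k)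
  · exact Or.inl hd
  right
  obtain ⟨e, he, he'⟩ := Finset.not_disjoint_iff.1 hd
  obtain ⟨t₀, -, ht₀, rfl⟩ := mem_segE.1 he
  obtain ⟨h1, h2⟩ := exists_of_mem_segE he'
  let P : ℕ → Prop := fun t => ∃ p ≤ k, u t = v p
  have hex : ∃ t, P t := ⟨t₀, h1⟩
  set s := Nat.find hex
  have hs : P s := Nat.find_spec hex
  have hst : s ≤ t₀ := Nat.find_min' hex h1
  have hsmin : ∀ t < s, ¬ P t := fun t => Nat.find_min hex
  set f := Nat.findGreatest P k
  have hf : P f := Nat.findGreatest_spec (P := P) (show t₀ + 1 ≤ k from ht₀) h2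
  have hft : t₀ + 1 ≤ f := Nat.le_findGreatest ht₀ h2
  have hfk : f ≤ k := Nat.findGreatest_le k
  have hfmax : ∀ t, f < t → t ≤ k → ¬ P t := fun t a b => Nat.findGreatest_is_greatest a b
  have hsf : s + (f - s) = f := by omega
  have hr : Set.InjOn (fun t => u (s + t)) (Set.Iic (f - s)) := by
    intro a ha b hb h
    simp only [Set.mem_Iic] at ha hb
    have := hu (Set.mem_Iic.2 (by omega)) (Set.mem_Iic.2 (by omega)) h
    omega
  have hwt : segW w (fun t => u (s + t)) 0 (f - s) ≤ x := by
    rw [segW_shift, hsf]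
    have h2 := segW_add w u (Nat.zero_le s) (show s ≤ f by omega)
    have h3 := segW_add w u (Nat.zero_le f) hfk
    linarith [segW_nonneg hw u 0 s, segW_nonneg hw u f k]
  have hedges := edges_mem_of_no_detour hw hno hr hs (by simpa only [hsf] using hf) hwt
  obtain ⟨p, hp, hor⟩ := eq_segment hv (by omega) hr hedges
  have hdis : Disjoint (segE u 0 s ∪ segE u (s + (f - s)) k) (segE v 0 k) := by
    rw [hsf, Finset.disjoint_left]
    intro e he hev
    rcases Finset.mem_union.1 he with he | he
    · obtain ⟨t, -, ht, rfl⟩ := mem_segE.1 he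
      exact hsmin t ht (exists_of_mem_segE hev).1
    · obtain ⟨t, ht, ht', rfl⟩ := mem_segE.1 he
      exact hfmax (t + 1) (by omega) (by omega) (exists_of_mem_segE hev).2
  rcases hor with h | h
  · exact ⟨s, f - s, p, true, by omega, by omega, hp, by simpa using h, hdis⟩
  · exact ⟨s, f - s, p, false, by omega, by omega, hp, by simpa using h, hdis⟩

lemma Overlap.segW_eq {k : ℕ} {v u : ℕ → V} {s j p : ℕ} {o : Bool} (h : Overlap k v u s j p o)
    (w : Sym2 V → ℝ) : segW w u s (s + j) = segW w v p (p + j) := by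
  obtain ⟨-, -, -, h, -⟩ := h
  rw [← segW_shift]
  cases o
  · rw [← segW_reverse]
    exact segW_congr fun t _ ht => by simpa using h t ht
  · rw [← segW_shift w v]
    exact segW_congr fun t _ ht => by simpa using h t ht

end Comb

/-! ### Light paths without light detours are geodesics -/

section MinPath

/-- Vertex sequences injective on `[0, k]` are paths of `K_n` with `k` edges. -/
lemma exists_walk_of_seq {n : ℕ} (w : Sym2 (Fin n) → ℝ) {v : ℕ → Fin n} {k : ℕ}
    (hv : Set.InjOn v (Set.Iic k)) :
    ∃ p : (Kn n).Walk (v 0) (v k), p.IsPath ∧ p.length = k ∧ walkWeight w p = segW w v 0 k := by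
  suffices h : ∃ p : (Kn n).Walk (v 0) (v k), p.support = (List.range (k + 1)).map v ∧
      p.length = k ∧ walkWeight w p = segW w v 0 k by
    obtain ⟨p, h1, h2, h3⟩ := h
    refine ⟨p, ?_, h2, h3⟩
    rw [SimpleGraph.Walk.isPath_def, h1]
    refine List.Nodup.map_on ?_ List.nodup_range
    intro a ha b hb h
    simp only [List.mem_range] at ha hb
    exact hv (Set.mem_Iic.2 (by omega)) (Set.mem_Iic.2 (by omega)) h
  induction k with
  | zero => exact ⟨SimpleGraph.Walk.nil, by simp, rfl, by simp [walkWeight, segW]⟩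
  | succ k ih =>
    obtain ⟨p, h1, h2, h3⟩ := ih (hv.mono fun t ht =>
      Set.mem_Iic.2 ((Set.mem_Iic.1 ht).trans (Nat.le_succ k)))
    have hadj : (Kn n).Adj (v k) (v (k + 1)) := by
      have : v k ≠ v (k + 1) := fun h => by
        have := hv (Set.mem_Iic.2 (by omega)) (Set.mem_Iic.2 (by omega)) h
        omega
      simpa [Kn] using this
    refine ⟨p.concat hadj, ?_, by simp [h2], ?_⟩
    · rw [SimpleGraph.Walk.support_concat, h1, List.range_succ (n := k + 1)]
      simp
    · rw [walkWeight, SimpleGraph.Walk.edges_concat, segW, Finset.sum_Ico_succ_top (Nat.zero_le k)]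
      rw [walkWeight, segW] at h3
      simp [h3]

lemma walkWeight_eq_segW {n : ℕ} (w : Sym2 (Fin n) → ℝ) {i j : Fin n} (p : (Kn n).Walk i j) :
    walkWeight w p = segW w p.getVert 0 p.length := by
  induction p with
  | nil => simp [walkWeight, segW]
  | @cons a b c h p ih =>
    have h1 : walkWeight w (SimpleGraph.Walk.cons h p) = w s(a, b) + walkWeight w p := by
      simp [walkWeight]
    rw [h1, ih]
    simp only [segW, Finset.sum_Ico_eq_sum_range, Nat.sub_zero, zero_add,
      SimpleGraph.Walk.length_cons, Finset.sum_range_succ']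
    simp only [SimpleGraph.Walk.getVert_cons_succ, SimpleGraph.Walk.getVert_zero]
    rw [add_comm]

/-- A light path without light detours is a minimum-weight path: a lighter competitor would use edges
of `v` only, and so coincide with `v`. -/
lemma le_maxMinLen_of_no_detour {n : ℕ} {w : Sym2 (Fin n) → ℝ} (hw : ∀ e, 0 ≤ w e)
    {v : ℕ → Fin n} {k : ℕ} {x : ℝ} (hv : Set.InjOn v (Set.Iic k))
    (hno : ∀ r l, IsDetour v k r l → x < segW w r 0 l) (hx : segW w v 0 k ≤ x) :
    k ≤ maxMinLen w := by
  obtain ⟨p, hp, hlen, hwt⟩ := exists_walk_of_seq w hv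
  rw [← hlen]
  refine le_maxMinLen (p := p) ⟨hp, fun q hq => ?_⟩
  rw [hwt]
  by_contra! hlt
  have hqx := hlt.le.trans hx
  rw [walkWeight_eq_segW] at hlt hqx
  have hq0 : q.getVert 0 = v 0 := q.getVert_zero
  have hql : q.getVert q.length = v k := q.getVert_length
  have hqi : Set.InjOn q.getVert (Set.Iic q.length) := hq.getVert_injOn
  rcases Nat.eq_zero_or_pos q.length with h0 | hpos
  · rw [h0] at hql
    have : 0 = k := hv (Set.mem_Iic.2 (by omega)) (Set.mem_Iic.2 le_rfl) (hq0.symm.trans hql)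
    subst this
    simp [h0, segW] at hlt
  have hedges := edges_mem_of_no_detour hw hno hqi ⟨0, Nat.zero_le _, hq0⟩ ⟨k, le_rfl, hql⟩ hqx
  obtain ⟨a, ha, h | h⟩ := eq_segment hv hpos hqi hedges
  · have h1 := h 0 (Nat.zero_le _)
    have h2 := h _ le_rfl
    have h3 := hv (Set.mem_Iic.2 (Nat.zero_le _)) (Set.mem_Iic.2 (by omega)) (hq0.symm.trans h1)
    have h4 := hv (Set.mem_Iic.2 le_rfl) (Set.mem_Iic.2 (by omega)) (hql.symm.trans h2)
    have h5 : a = 0 := by omega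
    subst h5
    rw [show q.length = k by omega] at hlt h
    rw [segW_congr (v := v) fun t _ ht => by simpa using h t ht] at hlt
    exact lt_irrefl _ hlt
  · have h1 := h 0 (Nat.zero_le _)
    have h3 := hv (Set.mem_Iic.2 (Nat.zero_le _)) (Set.mem_Iic.2 (by omega)) (hq0.symm.trans h1)
    omega

end MinPath

/-! ### Chernoff bounds and independence of edge weights -/

section Prob

variable {n : ℕ}

lemma isProb_edgeSpace (hn : 0 < n) : IsProbabilityMeasure (edgeSpace n) := by
  have hr : (0 : ℝ) < 1 / n := by positivity
  have := isProb_exp hr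
  show IsProbabilityMeasure (Measure.pi fun _ : Sym2 (Fin n) => expMeasure (1 / (n : ℝ)))
  infer_instance

lemma edgeSpace_pos_ae (hn : 0 < n) : ∀ᵐ w ∂edgeSpace n, ∀ e, 0 < w e := by
  have hr : (0 : ℝ) < 1 / n := by positivity
  exact expPi_pos_ae (ι := Sym2 (Fin n)) hr

/-- Exponential Markov inequality for weighted sums of edge weights. -/
lemma chernoff (hn : 0 < n) (S : Finset (Sym2 (Fin n))) (θ : Sym2 (Fin n) → ℝ)
    (hθ : ∀ e, 0 < θ e) (y : ℝ) :
    (edgeSpace n).real {w | ∑ e ∈ S, θ e * w e ≤ y} ≤ exp y * ∏ e ∈ S, (1 / (n * θ e)) := by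
  have hn' : (0 : ℝ) < n := by exact_mod_cast hn
  have hr : (0 : ℝ) < 1 / n := by positivity
  refine ENNReal.toReal_le_of_le_ofReal (by
    refine mul_nonneg (exp_pos _).le (Finset.prod_nonneg fun e _ => ?_)
    have := hθ e
    positivity) ?_
  have h1 : edgeSpace n {w | ∑ e ∈ S, θ e * w e ≤ y} ≤
      ∫⁻ w, ENNReal.ofReal (exp y) * ENNReal.ofReal (exp (-∑ e ∈ S, θ e * w e)) ∂edgeSpace n := by
    rw [← lintegral_indicator_one (measurableSet_le (by fun_prop) measurable_const)]
    refine lintegral_mono fun w => ?_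
    by_cases hw : w ∈ {w : Sym2 (Fin n) → ℝ | ∑ e ∈ S, θ e * w e ≤ y}
    · rw [Set.indicator_of_mem hw, Pi.one_apply, ← ENNReal.ofReal_mul (exp_pos _).le, ← exp_add,
        ← ENNReal.ofReal_one]
      refine ENNReal.ofReal_le_ofReal (one_le_exp ?_)
      have : ∑ e ∈ S, θ e * w e ≤ y := hw
      linarith
    · rw [Set.indicator_of_notMem hw]; exact zero_le
  refine h1.trans ?_
  rw [lintegral_const_mul _ (by fun_prop)]
  have h2 := lintegral_expPi_exp hr S θ (fun e => (hθ e).le)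
  rw [show edgeSpace n = Measure.pi fun _ : Sym2 (Fin n) => expMeasure (1 / (n : ℝ)) from rfl, h2,
    ← ENNReal.ofReal_mul (exp_pos _).le]
  refine ENNReal.ofReal_le_ofReal (mul_le_mul_of_nonneg_left ?_ (exp_pos _).le)
  refine Finset.prod_le_prod (fun e _ => ?_) fun e _ => ?_
  · have := hθ e; positivity
  · have := hθ e
    rw [div_le_div_iff₀ (by positivity) (by positivity)]
    field_simp
    linarith

lemma chernoff_const (hn : 0 < n) (S : Finset (Sym2 (Fin n))) {θ : ℝ} (hθ : 0 < θ) (y : ℝ) :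
    (edgeSpace n).real {w | ∑ e ∈ S, w e ≤ y} ≤ exp (θ * y) * (1 / (n * θ)) ^ S.card := by
  have h := chernoff hn S (fun _ => θ) (fun _ => hθ) (θ * y)
  rw [Finset.prod_const] at h
  refine le_trans (le_of_eq ?_) h
  congr 1
  ext w
  simp only [Set.mem_ofPred_eq]
  rw [← Finset.mul_sum, mul_le_mul_iff_right₀ hθ]

/-- Events determined by disjoint sets of edges are independent. -/
lemma real_inter_of_dependsOn (hn : 0 < n) (S : Finset (Sym2 (Fin n)))
    {A B : Set (Sym2 (Fin n) → ℝ)} (hA : MeasurableSet A) (hB : MeasurableSet B)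
    (hAS : ∀ w w', (∀ e ∈ S, w e = w' e) → (w ∈ A ↔ w' ∈ A))
    (hBS : ∀ w w', (∀ e, e ∉ S → w e = w' e) → (w ∈ B ↔ w' ∈ B)) :
    (edgeSpace n).real (A ∩ B) = (edgeSpace n).real A * (edgeSpace n).real B := by
  classical
  have hr : (0 : ℝ) < 1 / n := by positivity
  have := isProb_exp hr
  have h := lintegral_pi_mul_of_dependsOn (expMeasure (1 / (n : ℝ))) S
    (F := A.indicator 1) (G := B.indicator 1) (measurable_one.indicator hA)
    (measurable_one.indicator hB) ?_ ?_
  · have h2 : ∀ w : Sym2 (Fin n) → ℝ, A.indicator (1 : (Sym2 (Fin n) → ℝ) → ℝ≥0∞) w * B.indicator 1 w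
        = (A ∩ B).indicator 1 w := fun w => by
      rw [Set.inter_indicator_one]; rfl
    rw [lintegral_congr h2, lintegral_indicator_one hA, lintegral_indicator_one hB,
      lintegral_indicator_one (hA.inter hB)] at h
    rw [measureReal_def, measureReal_def, measureReal_def, ← ENNReal.toReal_mul]
    exact congrArg _ h
  · intro w w' hw
    simp only [Set.indicator, hAS w w' hw, Pi.one_apply]
  · intro w w' hw
    simp only [Set.indicator, hBS w w' (fun e he => hw e (by simpa using he)), Pi.one_apply]

/-! ### Light paths whose segments are not too light -/

/-- Slack allowed to the complement of a segment of `j` edges in a path of `k` edges. The slope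
`(1 + 1 / α) / α = (log α) / α` is the one for which the Chernoff bound at parameter `α` gives exactly
`n ^ (-(k - j)) * exp (α * D)` for the complement, the number of ways to choose it cancelling the
first factor. -/
noncomputable def slack (α D : ℝ) (k j : ℕ) : ℝ := (1 + 1 / α) * ((k - j : ℕ) : ℝ) / α + D

/-- The path `v 0, …, v k` has weight at most `x`, and no segment of it is so light that it leaves
more than `slack` to the rest of the path. -/
def goodEv (α D : ℝ) (x : ℝ) (k : ℕ) (v : ℕ → Fin n) : Set (Sym2 (Fin n) → ℝ) :=
  {w | segW w v 0 k ≤ x ∧ ∀ p j, 0 < j → p + j ≤ k → x - segW w v p (p + j) ≤ slack α D k j}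

/-- The path `v 0, …, v k` has a detour of weight at most `x`. -/
def detEv (x : ℝ) (k : ℕ) (v : ℕ → Fin n) : Set (Sym2 (Fin n) → ℝ) :=
  {w | ∃ r l, IsDetour v k r l ∧ segW w r 0 l ≤ x}

@[fun_prop]
lemma measurable_segW {V : Type*} (v : ℕ → V) (a b : ℕ) :
    Measurable fun w : Sym2 V → ℝ => segW w v a b := by
  unfold segW; fun_prop

lemma measurableSet_goodEv (α D x : ℝ) (k : ℕ) (v : ℕ → Fin n) :
    MeasurableSet (goodEv α D x k v) := by
  have : goodEv α D x k v = {w | segW w v 0 k ≤ x} ∩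
      ⋂ (p : ℕ) (j : ℕ) (_ : 0 < j) (_ : p + j ≤ k), {w | x - segW w v p (p + j) ≤ slack α D k j} := by
    ext w; simp [goodEv]
  rw [this]
  refine (measurableSet_le (by fun_prop) measurable_const).inter ?_
  refine MeasurableSet.iInter fun p => MeasurableSet.iInter fun j => MeasurableSet.iInter fun _ =>
    MeasurableSet.iInter fun _ => measurableSet_le (by fun_prop) measurable_const

/-- The infinite sequence that follows `r` and then stays at its last vertex. -/
def extSeq {V : Type*} {k : ℕ} (r : Fin (k + 1) → V) : ℕ → V :=
  fun t => r ⟨min t k, by omega⟩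

lemma extSeq_eq {V : Type*} {k : ℕ} (r : ℕ → V) {t : ℕ} (ht : t ≤ k) :
    extSeq (fun i : Fin (k + 1) => r i) t = r t := by
  simp [extSeq, ht]

lemma extSeq_apply {V : Type*} {k : ℕ} (r : Fin (k + 1) → V) (t : Fin (k + 1)) :
    extSeq r t = r t := by
  simp only [extSeq]
  congr 1
  ext
  simp
  omega

lemma extSeq_injOn {V : Type*} {k : ℕ} {r : Fin (k + 1) → V} (hr : Function.Injective r) :
    Set.InjOn (extSeq r) (Set.Iic k) := by
  intro s hs t ht h
  have := hr h
  simp only [Fin.mk.injEq] at this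
  simp only [Set.mem_Iic] at hs ht
  omega

lemma IsDetour.extSeq {v : ℕ → Fin n} {k : ℕ} {r : ℕ → Fin n} {l : ℕ} (h : IsDetour v k r l) :
    IsDetour v k (extSeq (fun i : Fin (l + 1) => r i)) l := by
  obtain ⟨h1, h2, h3, h4, h5⟩ := h
  refine ⟨h1, ?_, ?_, ?_, ?_⟩
  · intro s hs t ht h
    rw [extSeq_eq r hs, extSeq_eq r ht] at h
    exact h2 hs ht h
  · rwa [extSeq_eq r (Nat.zero_le _)]
  · rwa [extSeq_eq r le_rfl]
  · intro t ht
    rw [extSeq_eq r ht.le, extSeq_eq r ht]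
    exact h5 t ht

lemma IsDetour.lt {v : ℕ → Fin n} {k : ℕ} {r : ℕ → Fin n} {l : ℕ} (h : IsDetour v k r l) :
    l < n := by
  have h1 : Function.Injective fun i : Fin (l + 1) => r i := by
    intro a b hab
    have := h.2.1 (Set.mem_Iic.2 (by omega)) (Set.mem_Iic.2 (by omega)) hab
    exact Fin.ext this
  simpa using Fintype.card_le_of_injective _ h1

/-- Detours are paths, so they have fewer than `n` edges: the event is a finite union. -/
lemma detEv_eq (x : ℝ) (k : ℕ) (v : ℕ → Fin n) :
    detEv x k v = ⋃ l ∈ Finset.Ico 1 n, ⋃ (r : Fin (l + 1) → Fin n)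
      (_ : IsDetour v k (extSeq r) l), {w | segW w (extSeq r) 0 l ≤ x} := by
  ext w
  simp only [detEv, Set.mem_iUnion, Set.mem_ofPred_eq, exists_prop, Finset.mem_Ico]
  constructor
  · rintro ⟨r, l, h, hw⟩
    refine ⟨l, ⟨h.1, h.lt⟩, fun i => r i, h.extSeq, ?_⟩
    rwa [segW_congr fun t _ ht => extSeq_eq r ht]
  · rintro ⟨l, -, r, h, hw⟩
    exact ⟨_, l, h, hw⟩

lemma measurableSet_detEv (x : ℝ) (k : ℕ) (v : ℕ → Fin n) : MeasurableSet (detEv x k v) := by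
  rw [detEv_eq]
  refine Finset.measurableSet_biUnion _ fun l _ => MeasurableSet.iUnion fun r =>
    MeasurableSet.iUnion fun _ => measurableSet_le (by fun_prop) measurable_const

/-- `goodEv` is determined by the edges of `v`, and `detEv` by the other edges; hence the two events are
independent. -/
lemma goodEv_dependsOn {α D x : ℝ} {k : ℕ} {v : ℕ → Fin n} {w w' : Sym2 (Fin n) → ℝ}
    (h : ∀ e ∈ segE v 0 k, w e = w' e) : w ∈ goodEv α D x k v ↔ w' ∈ goodEv α D x k v := by
  have h1 : ∀ a b, b ≤ k → segW w v a b = segW w' v a b := fun a b hb =>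
    Finset.sum_congr rfl fun t ht => h _ (mem_segE.2 ⟨t, Nat.zero_le _,
      by have := Finset.mem_Ico.1 ht; omega, rfl⟩)
  simp only [goodEv, Set.mem_ofPred_eq, h1 0 k le_rfl]
  refine and_congr_right fun _ => forall_congr' fun p => forall_congr' fun j =>
    forall_congr' fun _ => forall_congr' fun hp => ?_
  rw [h1 p (p + j) hp]

lemma detEv_dependsOn {x : ℝ} {k : ℕ} {v : ℕ → Fin n} {w w' : Sym2 (Fin n) → ℝ}
    (h : ∀ e, e ∉ segE v 0 k → w e = w' e) : w ∈ detEv x k v ↔ w' ∈ detEv x k v := by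
  simp only [detEv, Set.mem_ofPred_eq]
  refine exists_congr fun r => exists_congr fun l => and_congr_right fun hd => ?_
  have : segW w r 0 l = segW w' r 0 l := Finset.sum_congr rfl fun t ht =>
    h _ (hd.2.2.2.2 t (Finset.mem_Ico.1 ht).2)
  rw [this]

/-- Number of sequences prescribed on a window `[s, s + j]`. -/
lemma card_window_le {k s j : ℕ} (hsj : s + j ≤ k) (f : ℕ → Fin n) :
    (Finset.univ.filter fun r : Fin (k + 1) → Fin n => ∀ t : Fin (k + 1), s ≤ t → t ≤ s + j →
      r t = f t).card ≤ n ^ (k - j) := by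
  classical
  let F : ℕ → Finset (Fin n) := fun t => if s ≤ t ∧ t ≤ s + j then {f t} else Finset.univ
  have hsub : (Finset.univ.filter fun r : Fin (k + 1) → Fin n => ∀ t : Fin (k + 1), s ≤ t →
      t ≤ s + j → r t = f t) ⊆ Fintype.piFinset fun t : Fin (k + 1) => F t := by
    intro r hr
    rw [Finset.mem_filter] at hr
    rw [Fintype.mem_piFinset]
    intro t
    simp only [F]
    split_ifs with h
    · simpa using hr.2 t h.1 h.2
    · simp
  refine (Finset.card_le_card hsub).trans (le_of_eq ?_)
  rw [Fintype.card_piFinset, Fin.prod_univ_eq_prod_range (fun t => (F t).card),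
    Finset.range_eq_Ico, ← Finset.prod_Ico_consecutive _ (Nat.zero_le s) (show s ≤ k + 1 by omega),
    ← Finset.prod_Ico_consecutive _ (show s ≤ s + j + 1 by omega) (show s + j + 1 ≤ k + 1 by omega)]
  have h1 : ∏ t ∈ Finset.Ico 0 s, (F t).card = n ^ s := by
    rw [Finset.prod_congr rfl (g := fun _ => n)]
    · simp
    · intro t ht
      have := Finset.mem_Ico.1 ht
      simp only [F]; rw [if_neg (by omega)]; simp
  have h2 : ∏ t ∈ Finset.Ico s (s + j + 1), (F t).card = 1 := by
    refine Finset.prod_eq_one fun t ht => ?_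
    have := Finset.mem_Ico.1 ht
    simp only [F]; rw [if_pos (by omega)]; simp
  have h3 : ∏ t ∈ Finset.Ico (s + j + 1) (k + 1), (F t).card = n ^ (k - s - j) := by
    rw [Finset.prod_congr rfl (g := fun _ => n)]
    · simp; congr 1; omega
    · intro t ht
      have := Finset.mem_Ico.1 ht
      simp only [F]; rw [if_neg (by omega)]; simp
  rw [h1, h2, h3, one_mul, ← pow_add]
  congr 1; omega

/-- Number of sequences of `l + 1` vertices that start and end in a set of `m` vertices. -/
lemma card_ends_le {l m : ℕ} (hl : 1 ≤ l) (S : Finset (Fin n)) (hS : S.card ≤ m) :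
    (Finset.univ.filter fun r : Fin (l + 1) → Fin n => extSeq r 0 ∈ S ∧ extSeq r l ∈ S).card
      ≤ m ^ 2 * n ^ (l - 1) := by
  classical
  let F : ℕ → Finset (Fin n) := fun t => if t = 0 ∨ t = l then S else Finset.univ
  have hsub : (Finset.univ.filter fun r : Fin (l + 1) → Fin n => extSeq r 0 ∈ S ∧ extSeq r l ∈ S)
      ⊆ Fintype.piFinset fun t : Fin (l + 1) => F t := by
    intro r hr
    rw [Finset.mem_filter] at hr
    rw [Fintype.mem_piFinset]
    intro t
    have h3 := extSeq_apply r t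
    simp only [F]
    split_ifs with h
    · rw [← h3]
      rcases h with h | h <;> rw [h]
      exacts [hr.2.1, hr.2.2]
    · simp
  refine (Finset.card_le_card hsub).trans ?_
  rw [Fintype.card_piFinset, Fin.prod_univ_eq_prod_range (fun t => (F t).card),
    Finset.range_eq_Ico, Finset.prod_Ico_succ_top (Nat.zero_le l),
    Finset.prod_eq_prod_Ico_succ_bot (by omega)]
  have h1 : ∏ t ∈ Finset.Ico (0 + 1) l, (F t).card = n ^ (l - 1) := by
    rw [Finset.prod_congr rfl (g := fun _ => n)]
    · simp
    · intro t ht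
      have := Finset.mem_Ico.1 ht
      simp only [F]; rw [if_neg (by omega)]; simp
  rw [h1]
  simp only [F, true_or, or_true, if_true]
  calc S.card * n ^ (l - 1) * S.card = S.card ^ 2 * n ^ (l - 1) := by ring
    _ ≤ _ := by gcongr

end Prob

/-! ### Probabilities of single paths and of pairs of paths -/

section Prob2

variable {n : ℕ}

lemma segE_subset {V : Type*} [DecidableEq V] (v : ℕ → V) {a b c d : ℕ} (h1 : c ≤ a) (h2 : b ≤ d) :
    segE v a b ⊆ segE v c d :=
  Finset.image_subset_image (Finset.Ico_subset_Ico h1 h2)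

/-- A light path is unlikely to contain a segment that is much too light. The edges of the segment
are weighted by `α` and the others by `α² / (1 + α)` in the exponential Markov inequality. -/
lemma bad_upper (hn : 0 < n) {α : ℝ} (hα : 1 < α) (D x : ℝ) {k : ℕ} {v : ℕ → Fin n}
    (hv : Set.InjOn v (Set.Iic k)) {p j : ℕ} (hpj : p + j ≤ k) :
    (edgeSpace n).real {w | segW w v 0 k ≤ x ∧ slack α D k j < x - segW w v p (p + j)} ≤
      (1 / (n : ℝ)) ^ k * ((1 / α) ^ k * exp (α * x - α / (1 + α) * D)) := by
  classical
  have := isProb_edgeSpace hn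
  have hn' : (0 : ℝ) < n := by exact_mod_cast hn
  have hα0 : 0 < α := by linarith
  -- chosen so that `φ * (1 + 1 / α) / α = 1 / α`: the gain from the slack then offsets the loss
  -- `(α / (α - φ)) ^ (k - j) = (1 + 1 / α) ^ (k - j)` from using the parameter `α - φ` off the segment
  set φ := α / (1 + α) with hφ
  set S := segE v 0 k with hS
  set S₁ := segE v p (p + j) with hS₁
  have hsub : S₁ ⊆ S := segE_subset v (Nat.zero_le _) hpj
  have hαφ : α - φ = α / (1 + 1 / α) := by rw [hφ]; field_simp; ring
  have hαφ0 : 0 < α - φ := by rw [hαφ]; positivity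
  let θ : Sym2 (Fin n) → ℝ := fun e => if e ∈ S₁ then α else α - φ
  have hθ : ∀ e, 0 < θ e := fun e => by simp only [θ]; split_ifs <;> assumption
  have hsum : ∀ w : Sym2 (Fin n) → ℝ, ∑ e ∈ S, θ e * w e =
      (α - φ) * segW w v 0 k + φ * segW w v p (p + j) := by
    intro w
    rw [segW_eq_sum hv le_rfl, segW_eq_sum hv hpj, ← Finset.sum_sdiff hsub]
    rw [← Finset.sum_sdiff (f := w) hsub]
    have e1 : ∑ e ∈ S \ S₁, θ e * w e = (α - φ) * ∑ e ∈ S \ S₁, w e := by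
      rw [Finset.mul_sum]
      refine Finset.sum_congr rfl fun e he => ?_
      simp only [θ, if_neg (Finset.mem_sdiff.1 he).2]
    have e2 : ∑ e ∈ S₁, θ e * w e = α * ∑ e ∈ S₁, w e := by
      rw [Finset.mul_sum]
      refine Finset.sum_congr rfl fun e he => ?_
      simp only [θ, if_pos he]
    rw [e1, e2]; ring
  have hprod : ∏ e ∈ S, (1 / (n * θ e)) = (1 / (n : ℝ)) ^ k * (1 / α) ^ k * (1 + 1 / α) ^ (k - j) := by
    rw [← Finset.prod_sdiff hsub]
    have e1 : ∏ e ∈ S \ S₁, (1 / (n * θ e)) = (1 / (n * (α - φ))) ^ (k - j) := by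
      rw [Finset.prod_congr rfl (g := fun _ => 1 / (n * (α - φ)))]
      · rw [Finset.prod_const, Finset.card_sdiff_of_subset hsub, card_segE hv le_rfl,
          card_segE hv hpj]
        congr 1; omega
      · intro e he
        simp only [θ, if_neg (Finset.mem_sdiff.1 he).2]
    have e2 : ∏ e ∈ S₁, (1 / (n * θ e)) = (1 / (n * α)) ^ j := by
      rw [Finset.prod_congr rfl (g := fun _ => 1 / (n * α))]
      · rw [Finset.prod_const, card_segE hv hpj]
        congr 1; omega
      · intro e he
        simp only [θ, if_pos he]
    have e3 : 1 / (n * (α - φ)) = 1 / (n * α) * (1 + 1 / α) := by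
      rw [hαφ]; field_simp
    rw [e1, e2, e3, mul_pow, mul_right_comm, ← pow_add, show k - j + j = k by omega, ← mul_pow]
    congr 2
    field_simp
  have hmono : (edgeSpace n).real {w | segW w v 0 k ≤ x ∧ slack α D k j < x - segW w v p (p + j)} ≤
      (edgeSpace n).real {w | ∑ e ∈ S, θ e * w e ≤ α * x - φ * slack α D k j} := by
    refine measureReal_mono ?_ (by finiteness)
    rintro w ⟨h1, h2⟩
    simp only [Set.mem_ofPred_eq, hsum]
    have hφ0 : 0 < φ := by positivity
    nlinarith [mul_le_mul_of_nonneg_left h1 hαφ0.le, mul_lt_mul_of_pos_left h2 hφ0]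
  refine hmono.trans ((chernoff hn S θ hθ _).trans ?_)
  rw [hprod]
  have hsl : φ * slack α D k j = (1 / α) * ((k - j : ℕ) : ℝ) + φ * D := by
    rw [slack, hφ]; field_simp; ring
  have hpow : (1 + 1 / α) ^ (k - j) ≤ exp ((1 / α) * ((k - j : ℕ) : ℝ)) := by
    rw [mul_comm, exp_nat_mul]
    refine pow_le_pow_left₀ (by positivity) ?_ _
    linarith [add_one_le_exp (1 / α)]
  calc exp (α * x - φ * slack α D k j) * ((1 / (n : ℝ)) ^ k * (1 / α) ^ k * (1 + 1 / α) ^ (k - j))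
      ≤ exp (α * x - φ * slack α D k j) * ((1 / (n : ℝ)) ^ k * (1 / α) ^ k *
        exp ((1 / α) * ((k - j : ℕ) : ℝ))) := by gcongr
    _ = (1 / (n : ℝ)) ^ k * ((1 / α) ^ k * (exp (α * x - φ * slack α D k j) *
        exp ((1 / α) * ((k - j : ℕ) : ℝ)))) := by ring
    _ = _ := by
        rw [← exp_add, hsl]
        congr 3; ring

/-- The density of a sum of `k` exponentials bounds the probability of being light from below; the
union bound over at most `(k + 1)²` segments removes the paths with a segment that is too light. -/
lemma good_lower (hn : 0 < n) {α : ℝ} (hα : 1 < α) (D : ℝ) {x : ℝ} (hx : 0 ≤ x) {k : ℕ}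
    {v : ℕ → Fin n} (hv : Set.InjOn v (Set.Iic k)) :
    (1 / (n : ℝ)) ^ k * (exp (-(x / n)) * x ^ k / k.factorial -
      (k + 1) ^ 2 * ((1 / α) ^ k * exp (α * x - α / (1 + α) * D))) ≤
      (edgeSpace n).real (goodEv α D x k v) := by
  classical
  have := isProb_edgeSpace hn
  have hn' : (0 : ℝ) < n := by exact_mod_cast hn
  have hr : (0 : ℝ) < 1 / n := by positivity
  set M := (1 / (n : ℝ)) ^ k * ((1 / α) ^ k * exp (α * x - α / (1 + α) * D)) with hM
  have hM0 : 0 ≤ M := by have : 0 < α := by linarith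
                         positivity
  set bad : ℕ × ℕ → Set (Sym2 (Fin n) → ℝ) := fun q =>
    {w | segW w v 0 k ≤ x ∧ slack α D k q.2 < x - segW w v q.1 (q.1 + q.2)} with hbad
  set I := ((Finset.range (k + 1)) ×ˢ (Finset.range (k + 1))).filter fun q => q.1 + q.2 ≤ k with hI
  have hcover : {w | segW w v 0 k ≤ x} ⊆ goodEv α D x k v ∪ ⋃ q ∈ I, bad q := by
    intro w hw
    by_cases hg : w ∈ goodEv α D x k v
    · exact Or.inl hg
    right
    simp only [goodEv, Set.mem_ofPred_eq, not_and] at hg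
    have hg := hg hw
    push Not at hg
    obtain ⟨p, j, hj, hp, hlt⟩ := hg
    simp only [Set.mem_iUnion, exists_prop]
    exact ⟨(p, j), by simp [hI]; omega, hw, hlt⟩
  have h1 : (edgeSpace n).real {w | segW w v 0 k ≤ x} ≤
      (edgeSpace n).real (goodEv α D x k v) + (k + 1) ^ 2 * M := by
    refine (measureReal_mono hcover (measure_ne_top _ _)).trans
      ((measureReal_union_le _ _).trans (add_le_add le_rfl ?_))
    refine (measureReal_biUnion_finset_le _ _).trans ?_
    refine (Finset.sum_le_sum (g := fun _ => M) fun q hq => ?_).trans ?_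
    · exact bad_upper hn hα D x hv (Finset.mem_filter.1 hq).2
    · rw [Finset.sum_const, nsmul_eq_mul]
      refine mul_le_mul_of_nonneg_right ?_ hM0
      have : I.card ≤ (k + 1) ^ 2 := (Finset.card_filter_le _ _).trans (by simp [sq])
      exact_mod_cast this
  have h2 : exp (-(1 / n * x)) * (1 / n * x) ^ k / (k.factorial : ℝ) ≤
      (edgeSpace n).real {w | segW w v 0 k ≤ x} := by
    have h := expPi_sum_le_lower hr (segE v 0 k) x hx
    rw [card_segE hv le_rfl, Nat.sub_zero] at h
    have h3 : {w | segW w v 0 k ≤ x} = {w : Sym2 (Fin n) → ℝ | ∑ e ∈ segE v 0 k, w e ≤ x} := by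
      ext w; simp only [Set.mem_ofPred_eq, segW_eq_sum hv le_rfl]
    rw [h3, measureReal_def, ← ENNReal.ofReal_le_iff_le_toReal (by finiteness)]
    exact h
  have h4 : exp (-(1 / n * x)) * (1 / n * x) ^ k / (k.factorial : ℝ) =
      (1 / (n : ℝ)) ^ k * (exp (-(x / n)) * x ^ k / k.factorial) := by
    rw [mul_pow, show 1 / (n : ℝ) * x = x / n by ring]; ring
  rw [h4] at h2
  have h5 := h2.trans h1
  rw [mul_sub]
  have : (1 / (n : ℝ)) ^ k * ((k + 1) ^ 2 * ((1 / α) ^ k * exp (α * x - α / (1 + α) * D))) =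
      (k + 1) ^ 2 * M := by rw [hM]; ring
  linarith

/-- First moment bound for light detours, of arbitrary length. A detour with `l` edges has `l - 1` free
vertices, and the endpoints cost a factor `(k + 1)²`. -/
lemma det_upper (hn : 0 < n) {x : ℝ} (hx : 0 < x) (k : ℕ) (v : ℕ → Fin n) :
    (edgeSpace n).real (detEv x k v) ≤ (k + 1) ^ 2 * (x * exp (x + 1)) / n := by
  classical
  have := isProb_edgeSpace hn
  have hn' : (0 : ℝ) < n := by exact_mod_cast hn
  -- with this Chernoff parameter the geometric series over the length `l` sums to `x`
  set θ := (x + 1) / x with hθ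
  have hθ0 : 0 < θ := by positivity
  have hθx : θ * x = x + 1 := by rw [hθ]; field_simp
  set Vs : Finset (Fin n) := (Finset.range (k + 1)).image v with hVs
  have hVc : Vs.card ≤ k + 1 := by simpa using Finset.card_image_le (s := Finset.range (k + 1)) (f := v)
  let R : (l : ℕ) → Finset (Fin (l + 1) → Fin n) := fun l =>
    Finset.univ.filter fun r => IsDetour v k (extSeq r) l
  have hR : ∀ l, 1 ≤ l → ((R l).card : ℝ) ≤ (k + 1) ^ 2 * n ^ (l - 1) := by
    intro l hl
    have h := (Finset.card_le_card (show R l ⊆ _ from ?_)).trans (card_ends_le hl Vs hVc)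
    · exact_mod_cast h
    · intro r hr
      obtain ⟨-, -, ⟨p, hp, hp'⟩, ⟨q, hq, hq'⟩, -⟩ := (Finset.mem_filter.1 hr).2
      refine Finset.mem_filter.2 ⟨Finset.mem_univ _, ?_, ?_⟩
      · rw [hp']; exact Finset.mem_image_of_mem v (Finset.mem_range.2 (by omega))
      · rw [hq']; exact Finset.mem_image_of_mem v (Finset.mem_range.2 (by omega))
  have hcover : detEv x k v ⊆ ⋃ l ∈ Finset.Ico 1 n, ⋃ r ∈ R l,
      {w | segW w (extSeq r) 0 l ≤ x} := by
    rw [detEv_eq]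
    refine Set.iUnion₂_mono fun l _ => Set.iUnion_mono fun r => ?_
    refine Set.iUnion_subset fun hd => ?_
    exact Set.subset_iUnion_of_subset (Finset.mem_filter.2 ⟨Finset.mem_univ _, hd⟩) le_rfl
  refine (measureReal_mono hcover (measure_ne_top _ _)).trans ?_
  refine (measureReal_biUnion_finset_le _ _).trans ?_
  have hl : ∀ l ∈ Finset.Ico 1 n, (edgeSpace n).real (⋃ r ∈ R l, {w | segW w (extSeq r) 0 l ≤ x}) ≤
      ((k + 1) ^ 2 * exp (x + 1) / n) * (1 / θ) ^ l := by
    intro l hl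
    have hl1 := (Finset.mem_Ico.1 hl).1
    refine (measureReal_biUnion_finset_le _ _).trans ?_
    refine (Finset.sum_le_sum (g := fun _ => exp (x + 1) * (1 / (n * θ)) ^ l) fun r hr => ?_).trans ?_
    · have hinj := (Finset.mem_filter.1 hr).2.2.1
      have h := chernoff_const hn (segE (extSeq r) 0 l) hθ0 x
      rw [card_segE hinj le_rfl, Nat.sub_zero, hθx] at h
      refine le_trans (le_of_eq ?_) h
      congr 1
      ext w
      simp only [Set.mem_ofPred_eq, segW_eq_sum hinj le_rfl]
    · rw [Finset.sum_const, nsmul_eq_mul]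
      refine (mul_le_mul_of_nonneg_right (hR l hl1) (by positivity)).trans (le_of_eq ?_)
      obtain ⟨m, rfl⟩ : ∃ m, l = m + 1 := ⟨l - 1, by omega⟩
      simp only [Nat.add_sub_cancel, one_div, mul_inv, mul_pow, inv_pow]
      field_simp
      exact (pow_succ _ _).symm
  refine (Finset.sum_le_sum hl).trans ?_
  rw [← Finset.mul_sum]
  have hq1 : 1 / θ < 1 := by rw [hθ, one_div_div, div_lt_one (by positivity)]; linarith
  have hgeo := geom_sum_Ico_le_of_lt_one (x := 1 / θ) (m := 1) (n := n) (by positivity) hq1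
  have hval : (1 / θ) ^ 1 / (1 - 1 / θ) = x := by
    rw [hθ, pow_one]; field_simp; ring
  rw [hval] at hgeo
  calc _ ≤ ((k + 1) ^ 2 * exp (x + 1) / n) * x := mul_le_mul_of_nonneg_left hgeo (by positivity)
    _ = _ := by ring

/-- Edge-disjoint paths are independent. -/
lemma disjoint_inter (hn : 0 < n) (α D x : ℝ) {k : ℕ} {u v : ℕ → Fin n}
    (h : Disjoint (segE u 0 k) (segE v 0 k)) :
    (edgeSpace n).real (goodEv α D x k v ∩ goodEv α D x k u) =
      (edgeSpace n).real (goodEv α D x k v) * (edgeSpace n).real (goodEv α D x k u) := by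
  refine real_inter_of_dependsOn hn (segE v 0 k) (measurableSet_goodEv _ _ _ _ _)
    (measurableSet_goodEv _ _ _ _ _) (fun w w' hw => goodEv_dependsOn hw) fun w w' hw =>
    goodEv_dependsOn fun e he => hw e (Finset.disjoint_left.1 h he)

/-- Detours of `v` avoid the edges of `v`, so having a light detour is independent of `goodEv`. -/
lemma good_inter_det (hn : 0 < n) (α D x : ℝ) {k : ℕ} {v : ℕ → Fin n} :
    (edgeSpace n).real (goodEv α D x k v ∩ (detEv x k v)ᶜ) =
      (edgeSpace n).real (goodEv α D x k v) * (1 - (edgeSpace n).real (detEv x k v)) := by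
  have := isProb_edgeSpace hn
  rw [← probReal_compl_eq_one_sub (measurableSet_detEv x k v)]
  exact real_inter_of_dependsOn hn (segE v 0 k) (measurableSet_goodEv _ _ _ _ _)
    (measurableSet_detEv _ _ _).compl (fun w w' hw => goodEv_dependsOn hw) fun w w' hw =>
    not_congr (detEv_dependsOn hw)

/-- If `u` shares with `v` a stretch of `j` edges, then its remaining `k - j` edges, which are
independent of `v`, have total weight at most the slack of that stretch. -/
lemma overlap_inter (hn : 0 < n) {α : ℝ} (hα : 1 < α) (heq : α * Real.log α - α = 1) (D x : ℝ)
    {k : ℕ} {u v : ℕ → Fin n} (hu : Set.InjOn u (Set.Iic k)) {s j p : ℕ} {o : Bool}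
    (h : Overlap k v u s j p o) :
    (edgeSpace n).real (goodEv α D x k v ∩ goodEv α D x k u) ≤
      (edgeSpace n).real (goodEv α D x k v) * (exp (α * D) * (1 / (n : ℝ)) ^ (k - j)) := by
  classical
  have := isProb_edgeSpace hn
  have hn' : (0 : ℝ) < n := by exact_mod_cast hn
  have hα0 : 0 < α := by linarith
  have hwt := h.segW_eq
  obtain ⟨hj, hs, hp, -, hdis⟩ := h
  set S' := segE u 0 s ∪ segE u (s + j) k with hS'
  have hdd : Disjoint (segE u 0 s) (segE u (s + j) k) := by
    rw [Finset.disjoint_left]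
    intro e h1 h2
    obtain ⟨t, -, ht, rfl⟩ := mem_segE.1 h1
    obtain ⟨t', ht', ht2, h3⟩ := mem_segE.1 h2
    have := edge_inj hu ht2 (by omega) h3
    omega
  have hcard : S'.card = k - j := by
    rw [hS', Finset.card_union_of_disjoint hdd, card_segE hu (by omega), card_segE hu le_rfl]
    omega
  set C := {w : Sym2 (Fin n) → ℝ | ∑ e ∈ S', w e ≤ slack α D k j} with hC
  have hsub : goodEv α D x k v ∩ goodEv α D x k u ⊆ goodEv α D x k v ∩ C := by
    rintro w ⟨hwv, hwu⟩
    refine ⟨hwv, ?_⟩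
    have h1 := hwv.2 p j hj hp
    have h2 := hwu.1
    have h3 := hwt w
    have h4 := segW_add w u (Nat.zero_le s) (show s ≤ s + j by omega)
    have h5 := segW_add w u (Nat.zero_le (s + j)) hs
    simp only [hC, Set.mem_ofPred_eq]
    rw [hS', Finset.sum_union hdd, ← segW_eq_sum hu (by omega), ← segW_eq_sum hu le_rfl]
    linarith
  refine (measureReal_mono hsub (by finiteness)).trans ?_
  rw [real_inter_of_dependsOn hn (segE v 0 k) (measurableSet_goodEv _ _ _ _ _)
    (measurableSet_le (by fun_prop) measurable_const) (fun w w' hw => goodEv_dependsOn hw) ?_]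
  · refine mul_le_mul_of_nonneg_left ?_ measureReal_nonneg
    refine (chernoff_const hn S' hα0 _).trans (le_of_eq ?_)
    -- the equation for `α`, in the form that makes the slack cancel `α ^ (-(k - j))`
    have hexp : exp (1 + 1 / α) = α := by
      rw [show 1 + 1 / α = Real.log α by field_simp; linarith, exp_log hα0]
    have hsl : α * slack α D k j = ((k - j : ℕ) : ℝ) * (1 + 1 / α) + α * D := by
      rw [slack]; field_simp
    rw [hcard, hsl, exp_add, exp_nat_mul, hexp, one_div, one_div, mul_inv, mul_pow]
    have : α ^ (k - j) * α⁻¹ ^ (k - j) = 1 := by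
      rw [← mul_pow, mul_inv_cancel₀ hα0.ne', one_pow]
    linear_combination (exp (α * D) * (n : ℝ)⁻¹ ^ (k - j)) * this
  · intro w w' hw
    simp only [hC, Set.mem_ofPred_eq]
    rw [Finset.sum_congr rfl fun e he => hw e (Finset.disjoint_left.1 hdis he)]

end Prob2

/-! ### Second moment method -/

section SecondMoment

/-- Second moment method: integrate `1_U ≥ 2cN - c²N²`, where `N` counts the events that occur and
`U` is their union. -/
lemma second_moment {Ω ι : Type*} [MeasurableSpace Ω] (μ : Measure Ω) [IsProbabilityMeasure μ]
    (F : Finset ι) (A : ι → Set Ω) (hA : ∀ i, MeasurableSet (A i)) (c : ℝ) :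
    2 * c * ∑ i ∈ F, μ.real (A i) - c ^ 2 * ∑ i ∈ F, ∑ j ∈ F, μ.real (A i ∩ A j) ≤
      μ.real (⋃ i ∈ F, A i) := by
  classical
  set U := ⋃ i ∈ F, A i with hU
  have hUm : MeasurableSet U := Finset.measurableSet_biUnion _ fun i _ => hA i
  let N : Ω → ℝ := fun w => ∑ i ∈ F, (A i).indicator 1 w
  have hN2 : ∀ w, N w ^ 2 = ∑ i ∈ F, ∑ j ∈ F, (A i ∩ A j).indicator (1 : Ω → ℝ) w := by
    intro w
    simp only [N, sq, Finset.sum_mul_sum, Set.inter_indicator_one, Pi.mul_apply]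
  have hint : ∀ B : Set Ω, MeasurableSet B → Integrable (B.indicator (1 : Ω → ℝ)) μ := fun B hB =>
    (integrable_const (1 : ℝ)).indicator hB
  have hNi : Integrable N μ := integrable_finsetSum _ fun i _ => hint _ (hA i)
  have hN2i : Integrable (fun w => N w ^ 2) μ := by
    simp only [hN2]
    exact integrable_finsetSum _ fun i _ => integrable_finsetSum _ fun j _ =>
      hint _ ((hA i).inter (hA j))
  have e1 : ∫ w, N w ∂μ = ∑ i ∈ F, μ.real (A i) := by
    simp only [N]
    rw [integral_finsetSum _ fun i _ => hint _ (hA i)]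
    exact Finset.sum_congr rfl fun i _ => integral_indicator_one (hA i)
  have e2 : ∫ w, N w ^ 2 ∂μ = ∑ i ∈ F, ∑ j ∈ F, μ.real (A i ∩ A j) := by
    simp only [hN2]
    rw [integral_finsetSum _ fun i _ => integrable_finsetSum _ fun j _ =>
      hint _ ((hA i).inter (hA j))]
    refine Finset.sum_congr rfl fun i _ => ?_
    rw [integral_finsetSum _ fun j _ => hint _ ((hA i).inter (hA j))]
    exact Finset.sum_congr rfl fun j _ => integral_indicator_one ((hA i).inter (hA j))
  rw [← e1, ← e2, ← integral_indicator_one hUm, ← integral_const_mul, ← integral_const_mul,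
    ← integral_sub (hNi.const_mul _) (hN2i.const_mul _)]
  refine integral_mono ((hNi.const_mul _).sub (hN2i.const_mul _)) (hint _ hUm) fun w => ?_
  by_cases hw : w ∈ U
  · rw [Set.indicator_of_mem hw, Pi.one_apply]
    -- `(c N - 1)² ≥ 0`
    nlinarith [sq_nonneg (c * N w - 1)]
  · have h0 : N w = 0 := Finset.sum_eq_zero fun i hi => by
      rw [Set.indicator_of_notMem]
      intro h
      exact hw (Set.mem_biUnion hi h)
    rw [Set.indicator_of_notMem hw]
    simp [h0]

variable {n : ℕ}

/-- The path `v` is light, has no segment that is too light, and has no light detour. If `v` is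
injective and the weights are nonnegative, it is then a minimum-weight path. -/
def pathEv (α D x : ℝ) (k : ℕ) (v : Fin (k + 1) → Fin n) : Set (Sym2 (Fin n) → ℝ) :=
  goodEv α D x k (extSeq v) ∩ (detEv x k (extSeq v))ᶜ

lemma measurableSet_pathEv (α D x : ℝ) (k : ℕ) (v : Fin (k + 1) → Fin n) :
    MeasurableSet (pathEv α D x k v) :=
  (measurableSet_goodEv _ _ _ _ _).inter (measurableSet_detEv _ _ _).compl

lemma pathEv_no_detour {α D x : ℝ} {k : ℕ} {v : Fin (k + 1) → Fin n} {w : Sym2 (Fin n) → ℝ}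
    (h : w ∈ pathEv α D x k v) : ∀ r l, IsDetour (extSeq v) k r l → x < segW w r 0 l := by
  intro r l hd
  by_contra! hle
  exact h.2 ⟨r, l, hd, hle⟩

/-- Edge-disjoint pairs contribute the product of their probabilities, all others are bounded through
their overlap pattern `(s, j, p, o)`, unless the intersection of the two events is null. -/
lemma pair_upper (hn : 0 < n) {α : ℝ} (hα : 1 < α) (heq : α * Real.log α - α = 1) (D x : ℝ)
    {k : ℕ} {u v : Fin (k + 1) → Fin n} (hu : Function.Injective u) (hv : Function.Injective v) :
    (edgeSpace n).real (pathEv α D x k v ∩ pathEv α D x k u) ≤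
      (edgeSpace n).real (goodEv α D x k (extSeq v)) *
        (edgeSpace n).real (goodEv α D x k (extSeq u)) +
      ∑ i ∈ (Finset.range (k + 1) ×ˢ Finset.range (k + 1) ×ˢ Finset.range (k + 1) ×ˢ
        (Finset.univ : Finset Bool)), Set.indicator
          {i | Overlap k (extSeq v) (extSeq u) i.1 i.2.1 i.2.2.1 i.2.2.2}
          (fun i => (edgeSpace n).real (goodEv α D x k (extSeq v)) *
            (exp (α * D) * (1 / (n : ℝ)) ^ (k - i.2.1))) i := by
  classical
  have := isProb_edgeSpace hn
  have hvi := extSeq_injOn hv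
  have hui := extSeq_injOn hu
  set G := (edgeSpace n).real (goodEv α D x k (extSeq v)) with hG
  set f : ℕ × ℕ × ℕ × Bool → ℝ := Set.indicator
          {i | Overlap k (extSeq v) (extSeq u) i.1 i.2.1 i.2.2.1 i.2.2.2}
          (fun i => G * (exp (α * D) * (1 / (n : ℝ)) ^ (k - i.2.1))) with hf
  have hf0 : ∀ i, 0 ≤ f i := fun i => Set.indicator_nonneg (fun i _ =>
    mul_nonneg measureReal_nonneg (by positivity)) i
  have hmono : (edgeSpace n).real (pathEv α D x k v ∩ pathEv α D x k u) ≤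
      (edgeSpace n).real (goodEv α D x k (extSeq v) ∩ goodEv α D x k (extSeq u)) :=
    measureReal_mono (Set.inter_subset_inter Set.inter_subset_left Set.inter_subset_left)
      (measure_ne_top _ _)
  by_cases hE : ∃ w ∈ pathEv α D x k v ∩ pathEv α D x k u, ∀ e, 0 ≤ w e
  · obtain ⟨w, ⟨hwv, hwu⟩, hw⟩ := hE
    refine hmono.trans ?_
    rcases disjoint_or_overlap hw hvi hui (pathEv_no_detour hwv) hwu.1.1 with h | ⟨s, j, p, o, h⟩
    · rw [disjoint_inter hn α D x h]
      linarith [Finset.sum_nonneg fun i (_ : i ∈ (Finset.range (k + 1) ×ˢ Finset.range (k + 1) ×ˢ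
        Finset.range (k + 1) ×ˢ (Finset.univ : Finset Bool))) => hf0 i]
    · refine (overlap_inter hn hα heq D x hui h).trans ?_
      have hmem : (s, j, p, o) ∈ (Finset.range (k + 1) ×ˢ Finset.range (k + 1) ×ˢ
          Finset.range (k + 1) ×ˢ (Finset.univ : Finset Bool)) := by
        obtain ⟨h1, h2, h3, -⟩ := h
        simp only [Finset.mem_product, Finset.mem_range, Finset.mem_univ, and_true]
        omega
      have h1 := Finset.single_le_sum (f := f) (fun i _ => hf0 i) hmem
      have h2 : f (s, j, p, o) = G * (exp (α * D) * (1 / (n : ℝ)) ^ (k - j)) :=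
        Set.indicator_of_mem (by exact h) _
      rw [h2] at h1
      have : 0 ≤ G * (edgeSpace n).real (goodEv α D x k (extSeq u)) :=
        mul_nonneg measureReal_nonneg measureReal_nonneg
      linarith
  · -- no nonnegative weights lie in the intersection, so it is a null event
    have h0 : edgeSpace n (pathEv α D x k v ∩ pathEv α D x k u) = 0 := by
      rw [measure_eq_zero_iff_ae_notMem]
      filter_upwards [edgeSpace_pos_ae hn] with w hw hmem
      exact hE ⟨w, hmem, fun e => (hw e).le⟩
    rw [measureReal_def, h0, ENNReal.toReal_zero]
    exact add_nonneg (mul_nonneg measureReal_nonneg measureReal_nonneg)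
      (Finset.sum_nonneg fun i _ => hf0 i)

/-- An overlap pattern prescribes `j + 1` of the `k + 1` vertices of `u`. -/
lemma card_overlap_le {k : ℕ} (v : ℕ → Fin n) (s j p : ℕ) (o : Bool)
    (F : Finset (Fin (k + 1) → Fin n)) [DecidablePred fun u : Fin (k + 1) → Fin n => Overlap k v (extSeq u) s j p o] :
    (F.filter fun u : Fin (k + 1) → Fin n => Overlap k v (extSeq u) s j p o).card
      ≤ n ^ (k - j) := by
  classical
  by_cases hsj : s + j ≤ k
  · refine (Finset.card_le_card ?_).trans
      (card_window_le hsj fun t => if o then v (p + (t - s)) else v (p + j - (t - s)))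
    intro u hu
    obtain ⟨-, -, -, h, -⟩ := (Finset.mem_filter.1 hu).2
    refine Finset.mem_filter.2 ⟨Finset.mem_univ _, fun t h1 h2 => ?_⟩
    have h3 := h (t - s) (by omega)
    rw [show s + (t - s) = t by omega, extSeq_apply] at h3
    exact h3
  · rw [Finset.filter_false_of_mem fun u _ h => hsj h.2.1]
    simp

/-- The `n ^ (k - j)` sequences `u` with a given overlap pattern cancel the factor `n ^ (-(k - j))` of
`overlap_inter`, so each of the `2 (k + 1)³` patterns costs at most `exp (α * D)`. -/
lemma sum_pair_upper (hn : 0 < n) {α : ℝ} (hα : 1 < α) (heq : α * Real.log α - α = 1) (D x : ℝ)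
    {k : ℕ} {v : Fin (k + 1) → Fin n} (hv : Function.Injective v)
    {F : Finset (Fin (k + 1) → Fin n)} (hF : ∀ u ∈ F, Function.Injective u) :
    ∑ u ∈ F, (edgeSpace n).real (pathEv α D x k v ∩ pathEv α D x k u) ≤
      (edgeSpace n).real (goodEv α D x k (extSeq v)) *
        (∑ u ∈ F, (edgeSpace n).real (goodEv α D x k (extSeq u)) +
          2 * (k + 1) ^ 3 * exp (α * D)) := by
  classical
  have hn' : (0 : ℝ) < n := by exact_mod_cast hn
  refine (Finset.sum_le_sum fun u hu => pair_upper hn hα heq D x (hF u hu) hv).trans ?_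
  rw [Finset.sum_add_distrib, ← Finset.mul_sum, mul_add]
  refine add_le_add le_rfl ?_
  rw [Finset.sum_comm]
  set G := (edgeSpace n).real (goodEv α D x k (extSeq v)) with hG
  have hG0 : 0 ≤ G := measureReal_nonneg
  refine (Finset.sum_le_sum (g := fun _ => G * exp (α * D)) fun i _ => ?_).trans (le_of_eq ?_)
  · simp only [Set.indicator, Set.mem_ofPred_eq]
    rw [← Finset.sum_filter, Finset.sum_const, nsmul_eq_mul]
    have h := card_overlap_le (extSeq v) i.1 i.2.1 i.2.2.1 i.2.2.2 F
    have h' : ((F.filter fun u : Fin (k + 1) → Fin n =>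
        Overlap k (extSeq v) (extSeq u) i.1 i.2.1 i.2.2.1 i.2.2.2).card : ℝ) ≤
        (n : ℝ) ^ (k - i.2.1) := by exact_mod_cast h
    refine (mul_le_mul_of_nonneg_right h' (by positivity)).trans (le_of_eq ?_)
    have h1 : (n : ℝ) ^ (k - i.2.1) * (1 / (n : ℝ)) ^ (k - i.2.1) = 1 := by
      rw [← mul_pow, mul_one_div_cancel hn'.ne', one_pow]
    linear_combination (G * exp (α * D)) * h1
  · rw [Finset.sum_const, nsmul_eq_mul]
    simp only [Finset.card_product, Finset.card_range, Finset.card_univ, Fintype.card_bool]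
    push_cast
    ring

/-- Lower tail of the maximal hopcount, from the second moment method applied to the events
`pathEv`; `M` is a lower bound for the expected number of good paths. -/
lemma lower_finite (hn : 0 < n) {α : ℝ} (hα : 1 < α) (heq : α * Real.log α - α = 1) (D : ℝ) {x : ℝ}
    (hx : 0 < x) {k : ℕ} {M : ℝ} (hM : 0 < M)
    (hMle : M ≤ ∑ v : Fin (k + 1) → Fin n with Function.Injective v,
      (edgeSpace n).real (goodEv α D x k (extSeq v))) :
    edgeSpace n {w | maxMinLen w < k} ≤
      ENNReal.ofReal (2 * ((k + 1) ^ 2 * (x * exp (x + 1)) / n) +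
        2 * (k + 1) ^ 3 * exp (α * D) / M) := by
  classical
  have := isProb_edgeSpace hn
  set F : Finset (Fin (k + 1) → Fin n) := Finset.univ.filter Function.Injective with hF
  have hFi : ∀ u ∈ F, Function.Injective u := fun u hu => (Finset.mem_filter.1 hu).2
  set m := ∑ v ∈ F, (edgeSpace n).real (goodEv α D x k (extSeq v)) with hm
  have hm0 : 0 < m := hM.trans_le hMle
  set ε := (k + 1 : ℝ) ^ 2 * (x * exp (x + 1)) / n with hε
  set R := 2 * (k + 1 : ℝ) ^ 3 * exp (α * D) with hR
  have hR0 : 0 ≤ R := by positivity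
  set U := ⋃ v ∈ F, pathEv α D x k v with hU
  have hUm : MeasurableSet U := Finset.measurableSet_biUnion _ fun v _ => measurableSet_pathEv _ _ _ _ _
  have h1 := second_moment (edgeSpace n) F (pathEv α D x k)
    (fun v => measurableSet_pathEv _ _ _ _ _) (1 / m)
  have h2 : (1 - ε) * m ≤ ∑ v ∈ F, (edgeSpace n).real (pathEv α D x k v) := by
    rw [hm, Finset.mul_sum]
    refine Finset.sum_le_sum fun v _ => ?_
    rw [pathEv, good_inter_det hn, mul_comm]
    exact mul_le_mul_of_nonneg_left (by linarith [det_upper hn hx k (extSeq v)]) measureReal_nonneg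
  have h3 : ∑ v ∈ F, ∑ u ∈ F, (edgeSpace n).real (pathEv α D x k v ∩ pathEv α D x k u) ≤
      m * (m + R) := by
    refine (Finset.sum_le_sum fun v hv => sum_pair_upper hn hα heq D x (hFi v hv) hFi).trans
      (le_of_eq ?_)
    rw [← Finset.sum_mul]
  have h4 : 1 - 2 * ε - R / M ≤ (edgeSpace n).real U := by
    refine le_trans ?_ h1
    have h5 : 2 * (1 - ε) ≤ 2 * (1 / m) * ∑ v ∈ F, (edgeSpace n).real (pathEv α D x k v) := by
      refine le_trans (le_of_eq ?_) (mul_le_mul_of_nonneg_left h2 (by positivity))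
      field_simp
    have h6 : (1 / m) ^ 2 * ∑ v ∈ F, ∑ u ∈ F,
        (edgeSpace n).real (pathEv α D x k v ∩ pathEv α D x k u) ≤ 1 + R / m := by
      refine (mul_le_mul_of_nonneg_left h3 (by positivity)).trans (le_of_eq ?_)
      field_simp
    have h7 : R / m ≤ R / M := div_le_div_of_nonneg_left hR0 hM hMle
    linarith
  have hae : ∀ᵐ w ∂edgeSpace n, maxMinLen w < k → w ∈ Uᶜ := by
    filter_upwards [edgeSpace_pos_ae hn] with w hw hlt hwU
    simp only [hU, Set.mem_iUnion, exists_prop] at hwU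
    obtain ⟨v, hv, hwv⟩ := hwU
    exact absurd (le_maxMinLen_of_no_detour (fun e => (hw e).le) (extSeq_injOn (hFi v hv))
      (pathEv_no_detour hwv) hwv.1.1) (by omega)
  refine (measure_mono_ae (s := {w | maxMinLen w < k}) (t := Uᶜ) hae).trans ?_
  rw [← ofReal_measureReal (measure_ne_top _ _), probReal_compl_eq_one_sub hUm]
  refine ENNReal.ofReal_le_ofReal ?_
  linarith

end SecondMoment

/-! ### Asymptotics -/

section Asymptotics

/-- A form of Stirling's upper bound. -/
lemma factorial_le_stirling {k : ℕ} (hk : 1 ≤ k) :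
    (k.factorial : ℝ) ≤ (k : ℝ) ^ (k + 1) * exp (1 - k) := by
  induction k, hk using Nat.le_induction with
  | base => simp
  | succ k hk ih =>
    have h1 : (k : ℝ) ≤ (k + 1) * exp (-(1 / (k + 1))) := by
      have h2 := Real.add_one_le_exp (-(1 / (k + 1 : ℝ)))
      have h3 : (k : ℝ) = (k + 1) * (-(1 / (k + 1 : ℝ)) + 1) := by field_simp; ring
      calc (k : ℝ) = (k + 1) * (-(1 / (k + 1 : ℝ)) + 1) := h3
        _ ≤ _ := mul_le_mul_of_nonneg_left h2 (by positivity)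
    have h5 : (k : ℝ) ^ (k + 1) ≤ (k + 1) ^ (k + 1) * exp (-1) := by
      refine (pow_le_pow_left₀ (by positivity) h1 _).trans (le_of_eq ?_)
      rw [mul_pow, ← Real.exp_nat_mul]
      congr 2
      push_cast
      field_simp
    rw [Nat.factorial_succ]
    push_cast
    calc ((k : ℝ) + 1) * k.factorial
        ≤ (k + 1) * (((k + 1) ^ (k + 1) * exp (-1)) * exp (1 - k)) := by
          refine mul_le_mul_of_nonneg_left (ih.trans ?_) (by positivity)
          exact mul_le_mul_of_nonneg_right h5 (exp_pos _).le
      _ = (k + 1) ^ (k + 1 + 1) * exp (1 - (k + 1)) := by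
          rw [mul_assoc, ← Real.exp_add, pow_succ ((k : ℝ) + 1) (k + 1)]
          rw [show (-1 + (1 - (k : ℝ))) = 1 - (k + 1) by ring]
          ring

/-- The equation for `α` says that `log α = 1 + 1 / α`. -/
lemma one_div_pow_eq_exp {α : ℝ} (hα : 1 < α) (heq : α * Real.log α - α = 1) (k : ℕ) :
    (1 / α) ^ k = exp (-(k * (1 + 1 / α))) := by
  have h0 : 0 < α := by linarith
  have h1 : Real.log α = 1 + 1 / α := by field_simp; linarith
  rw [← h1, one_div, ← Real.exp_log (inv_pos.2 h0), ← Real.exp_nat_mul, Real.log_inv]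
  congr 1
  ring

/-- Since `log α = 1 + 1 / α`, at `k ≈ α x` the exponential orders of `x ^ k` and `k!` combine to
`exp (-x)`: this is where the constant `α` is selected. -/
lemma pow_div_factorial_lower {α : ℝ} (hα : 1 < α) (heq : α * Real.log α - α = 1) {k : ℕ}
    (hk : 1 ≤ k) {x : ℝ} (hkx : k ≤ α * x) :
    exp (-1 - x) / k ≤ x ^ k / k.factorial := by
  have h0 : 0 < α := by linarith
  have hk0 : (0 : ℝ) < k := by exact_mod_cast hk
  have h1 : (k : ℝ) / α ≤ x := by rw [div_le_iff₀ h0]; linarith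
  have h2 : ((k : ℝ) / α) ^ k ≤ x ^ k := pow_le_pow_left₀ (by positivity) h1 _
  calc exp (-1 - x) / k ≤ exp (-1 - k / α) / k := by
        gcongr
    _ = ((k : ℝ) / α) ^ k / ((k : ℝ) ^ (k + 1) * exp (1 - k)) := by
        rw [show ((k : ℝ) / α) ^ k = k ^ k * exp (-(k * (1 + 1 / α))) by
          rw [← one_div_pow_eq_exp hα heq, ← mul_pow, mul_one_div]]
        rw [div_eq_div_iff (by positivity) (by positivity), pow_succ]
        have : exp (-1 - (k : ℝ) / α) * exp (1 - k) = exp (-(k * (1 + 1 / α))) := by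
          rw [← Real.exp_add]; congr 1; field_simp; ring
        linear_combination (k : ℝ) ^ k * k * this
    _ ≤ ((k : ℝ) / α) ^ k / k.factorial :=
        div_le_div_of_nonneg_left (by positivity) (by positivity) (factorial_le_stirling hk)
    _ ≤ x ^ k / k.factorial := by gcongr

/-- At least half of all vertex sequences are injective, by the Bernoulli inequality. -/
lemma half_pow_le_card_injective {n k : ℕ} (h : 2 * (k * (k + 1)) ≤ n) :
    (n : ℝ) ^ (k + 1) / 2 ≤
      ((Finset.univ : Finset (Fin (k + 1) → Fin n)).filter Function.Injective).card := by
  classical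
  have h1 : ((Finset.univ : Finset (Fin (k + 1) → Fin n)).filter Function.Injective).card =
      n.descFactorial (k + 1) := by
    rw [← Fintype.card_subtype, Fintype.card_congr (Equiv.subtypeInjectiveEquivEmbedding _ _),
      Fintype.card_embedding_eq, Fintype.card_fin, Fintype.card_fin]
  rcases Nat.eq_zero_or_pos n with rfl | hn
  · simp
  have hn' : (0 : ℝ) < n := by exact_mod_cast hn
  have hkn : k ≤ n := by nlinarith
  have h2 := Nat.pow_sub_le_descFactorial n (k + 1)
  rw [show n + 1 - (k + 1) = n - k by omega] at h2
  rw [h1]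
  have h3 : ((n : ℝ) - k) ^ (k + 1) ≤ n.descFactorial (k + 1) := by
    rw [← Nat.cast_sub hkn]; exact_mod_cast h2
  refine le_trans ?_ h3
  have h4 : (2 : ℝ) * (k * (k + 1)) ≤ n := by exact_mod_cast h
  have h5 : (k : ℝ) / n ≤ 1 := by rw [div_le_one hn']; exact_mod_cast hkn
  have h6 := one_add_mul_le_pow (a := -((k : ℝ) / n)) (by linarith) (k + 1)
  have h7 : (k + 1 : ℝ) * (k / n) ≤ 1 / 2 := by
    rw [← mul_div_assoc, div_le_iff₀ hn']; linarith
  have h8 : (n : ℝ) - k = n * (1 + -((k : ℝ) / n)) := by field_simp; ring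
  rw [h8, mul_pow, div_eq_mul_one_div]
  refine mul_le_mul_of_nonneg_left (le_trans ?_ h6) (by positivity)
  push_cast
  linarith

/-- Quantitative lower tail: the second moment bound at length `k = ⌊α x⌋` and weight
`x = log n - C log log n`, with `D = 8 log log n` in the slack; here `l` is `log n` and `m` is
`log log n`. The value of `D` makes segments that are too light negligible after the union bound.
The expected number of good paths is of order `n exp (-x) / k`, that is `l ^ C / k`, and `C = 8 α + 5`
makes it exceed the overlap term `(k + 1)³ exp (α D)` by a factor of order `l`. -/
lemma lower_quant {n : ℕ} {α : ℝ} (hα : 1 < α) (heq : α * Real.log α - α = 1) {l m : ℝ}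
    (hl : exp l = n) (hm : exp m = l) (hb : 16 * α ^ 3 * exp 4 ≤ l)
    (hc : 8 * α ^ 2 * l ^ 2 ≤ exp l) (hd : 1 ≤ l - (8 * α + 5) * m) :
    edgeSpace n {w | (maxMinLen w : ℝ) < α * l - (α * (8 * α + 5) + 1) * m} ≤
      ENNReal.ofReal ((8 * exp 1 * α ^ 2 + 64 * exp 2 * α ^ 4) / l) := by
  have h0 : 0 < α := by linarith
  have hl0 : 0 < l := hm ▸ exp_pos m
  have hn' : (0 : ℝ) < n := hl ▸ exp_pos l
  have hn : 0 < n := by exact_mod_cast hn'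
  have hα3 : 1 ≤ α ^ 3 := one_le_pow₀ hα.le
  have hle : exp 1 ≤ l := by
    have h1 : exp 1 ≤ exp 4 := exp_le_exp.2 (by norm_num)
    nlinarith [exp_pos 4]
  have hm1 : 1 ≤ m := by rw [← exp_le_exp, hm]; exact hle
  have hl1 : 1 ≤ l := by linarith [Real.add_one_le_exp (1 : ℝ)]
  set C := 8 * α + 5 with hC
  set x := l - C * m with hx
  have hCm : 0 ≤ C * m := by positivity
  have hxl : x ≤ l := by linarith
  set k := ⌊α * x⌋₊ with hk
  have hαx : 1 ≤ α * x := by nlinarith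
  have hk1 : 1 ≤ k := Nat.le_floor (by exact_mod_cast hαx)
  have hk0 : (0 : ℝ) < k := by exact_mod_cast hk1
  have hkx : (k : ℝ) ≤ α * x := Nat.floor_le (by linarith)
  have hxk : α * x < k + 1 := Nat.lt_floor_add_one _
  have hkl : (k : ℝ) ≤ α * l := hkx.trans (by gcongr)
  have hαl : 1 ≤ α * l := by nlinarith
  have hk1l : (k : ℝ) + 1 ≤ 2 * (α * l) := by linarith
  have hx0 : 0 < x := by linarith
  have hpow : ∀ j : ℕ, exp (-(j * m)) = (l ^ j)⁻¹ := fun j => by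
    rw [Real.exp_neg, Real.exp_nat_mul, hm]
  -- the probability of each individual event
  have hxn : x / n ≤ 1 := by
    rw [div_le_one hn', ← hl]; linarith [Real.add_one_le_exp l]
  have hq : ∀ v : ℕ → Fin n, Set.InjOn v (Set.Iic k) →
      (1 / (n : ℝ)) ^ k * (exp (-2 - x) / (2 * k)) ≤
        (edgeSpace n).real (goodEv α (8 * m) x k v) := by
    intro v hv
    refine le_trans (mul_le_mul_of_nonneg_left ?_ (by positivity))
      (good_lower hn hα (8 * m) hx0.le hv)
    have h1 : exp (-2 - x) / k ≤ exp (-(x / n)) * x ^ k / k.factorial := by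
      have h2 := pow_div_factorial_lower hα heq hk1 hkx
      have h3 : exp (-1) ≤ exp (-(x / n)) := exp_le_exp.2 (by linarith)
      calc exp (-2 - x) / k = exp (-1) * (exp (-1 - x) / k) := by
            rw [← mul_div_assoc, ← Real.exp_add]; ring_nf
        _ ≤ exp (-(x / n)) * (x ^ k / k.factorial) :=
            mul_le_mul h3 h2 (by positivity) (exp_pos _).le
        _ = _ := by ring
    have h4 : (1 / α) ^ k * exp (α * x - α / (1 + α) * (8 * m)) ≤ exp (2 - x) * (l ^ 4)⁻¹ := by
      rw [one_div_pow_eq_exp hα heq, ← hpow 4, ← Real.exp_add, ← Real.exp_add, exp_le_exp]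
      have h5 : 1 / 2 ≤ α / (1 + α) := by
        rw [div_le_div_iff₀ (by norm_num) (by linarith)]; linarith
      have h6 : x ≤ k * (1 / α) + 1 / α := by
        rw [mul_one_div, ← add_div, le_div_iff₀ h0]; linarith
      have h7 : 1 / α ≤ 1 := by rw [div_le_one h0]; exact hα.le
      push_cast
      nlinarith
    have h8 : ((k : ℝ) + 1) ^ 2 * (exp (2 - x) * (l ^ 4)⁻¹) ≤ exp (-2 - x) / (2 * k) := by
      have h9 : exp (2 - x) = exp 4 * exp (-2 - x) := by rw [← Real.exp_add]; ring_nf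
      have h10 : 2 * (k : ℝ) * (k + 1) ^ 2 * exp 4 ≤ l ^ 4 := by
        calc 2 * (k : ℝ) * (k + 1) ^ 2 * exp 4 ≤ 2 * (α * l) * (2 * (α * l)) ^ 2 * exp 4 := by
              gcongr
          _ = l ^ 3 * (8 * α ^ 3 * exp 4) := by ring
          _ ≤ l ^ 3 * l := by
              gcongr
              have : 0 < α ^ 3 * exp 4 := by positivity
              linarith
          _ = l ^ 4 := by ring
      rw [h9, le_div_iff₀ (by positivity)]
      calc ((k : ℝ) + 1) ^ 2 * (exp 4 * exp (-2 - x) * (l ^ 4)⁻¹) * (2 * k)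
          = exp (-2 - x) * ((2 * (k : ℝ) * (k + 1) ^ 2 * exp 4) / l ^ 4) := by
            rw [div_eq_mul_inv]; ring
        _ ≤ exp (-2 - x) * 1 := by
            gcongr
            rw [div_le_one (by positivity)]; exact h10
        _ = _ := mul_one _
    have h11 := mul_le_mul_of_nonneg_left h4 (by positivity : (0 : ℝ) ≤ ((k : ℝ) + 1) ^ 2)
    have h12 : exp (-2 - x) / k = 2 * (exp (-2 - x) / (2 * k)) := by field_simp
    linarith
  -- the expected number of events
  have hcard : 2 * (k * (k + 1)) ≤ n := by
    have : (2 : ℝ) * (k * (k + 1)) ≤ n := by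
      rw [← hl]
      refine le_trans ?_ hc
      calc (2 : ℝ) * (k * (k + 1)) ≤ 2 * ((α * l) * (2 * (α * l))) := by gcongr
        _ ≤ 8 * α ^ 2 * l ^ 2 := by nlinarith [sq_nonneg (α * l)]
    exact_mod_cast this
  set M := n * (exp (-2 - x) / (4 * k)) with hM
  have hMle : M ≤ ∑ v : Fin (k + 1) → Fin n with Function.Injective v,
      (edgeSpace n).real (goodEv α (8 * m) x k (extSeq v)) := by
    have h1 := Finset.card_nsmul_le_sum
      ((Finset.univ : Finset (Fin (k + 1) → Fin n)).filter Function.Injective)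
      (fun v => (edgeSpace n).real (goodEv α (8 * m) x k (extSeq v))) _
      fun v hv => hq (extSeq v) (extSeq_injOn (Finset.mem_filter.1 hv).2)
    refine le_trans ?_ h1
    rw [nsmul_eq_mul]
    refine le_trans (le_of_eq ?_)
      (mul_le_mul_of_nonneg_right (half_pow_le_card_injective hcard) (by positivity))
    rw [hM, pow_succ, one_div, inv_pow]
    field_simp
    norm_num
  have hfin := lower_finite hn hα heq (8 * m) hx0 (by positivity : 0 < M) hMle
  have hsub : {w : Sym2 (Fin n) → ℝ | (maxMinLen w : ℝ) < α * l - (α * C + 1) * m} ⊆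
      {w | maxMinLen w < k} := by
    intro w hw
    have hw : (maxMinLen w : ℝ) < α * l - (α * C + 1) * m := hw
    have h1 : α * x = α * l - α * C * m := by rw [hx]; ring
    have : (maxMinLen w : ℝ) < k := by nlinarith
    exact Nat.cast_lt.1 this
  refine (measure_mono hsub).trans (hfin.trans (ENNReal.ofReal_le_ofReal ?_))
  have hex : exp x = n * exp (-(C * m)) := by rw [hx, sub_eq_add_neg, Real.exp_add, hl]
  have hC4 : exp (-(C * m)) ≤ (l ^ 4)⁻¹ := by
    rw [← hpow 4, exp_le_exp]; push_cast; nlinarith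
  have hA : 2 * (((k : ℝ) + 1) ^ 2 * (x * exp (x + 1)) / n) ≤ 8 * exp 1 * α ^ 2 / l := by
    calc 2 * (((k : ℝ) + 1) ^ 2 * (x * exp (x + 1)) / n)
        = 2 * exp 1 * (k + 1) ^ 2 * x * exp (-(C * m)) := by
          rw [Real.exp_add, hex]; field_simp
      _ ≤ 2 * exp 1 * (2 * (α * l)) ^ 2 * l * (l ^ 4)⁻¹ := by gcongr
      _ = 8 * exp 1 * α ^ 2 / l := by field_simp; ring
  have hB : 2 * ((k : ℝ) + 1) ^ 3 * exp (α * (8 * m)) / M ≤ 64 * exp 2 * α ^ 4 / l := by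
    calc 2 * ((k : ℝ) + 1) ^ 3 * exp (α * (8 * m)) / M
        = 8 * exp 2 * k * (k + 1) ^ 3 * exp (-((5 : ℕ) * m)) := by
          have h1 : exp (-((5 : ℕ) * m)) = exp (α * (8 * m)) * exp (-(C * m)) := by
            rw [← Real.exp_add, hC]; congr 1; push_cast; ring
          have h2 : exp (-2 - x) = (exp 2)⁻¹ * (n * exp (-(C * m)))⁻¹ := by
            rw [← hex, ← Real.exp_neg, ← Real.exp_neg, ← Real.exp_add]; congr 1
          rw [hM, h1, h2]
          field_simp
          norm_num
      _ ≤ 8 * exp 2 * (α * l) * (2 * (α * l)) ^ 3 * exp (-((5 : ℕ) * m)) := by gcongr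
      _ = 64 * exp 2 * α ^ 4 / l := by rw [hpow 5]; field_simp; ring
  rw [add_div]
  exact add_le_add hA hB

lemma tendsto_log_nat : Tendsto (fun n : ℕ => Real.log n) atTop atTop :=
  Real.tendsto_log_atTop.comp tendsto_natCast_atTop_atTop

lemma tendsto_lower {α : ℝ} (hα : 1 < α) (heq : α * Real.log α - α = 1) :
    Tendsto (fun n : ℕ => edgeSpace n {w | (maxMinLen w : ℝ) <
      α * Real.log n - (α * (8 * α + 5) + 1) * Real.log (Real.log n)}) atTop (nhds 0) := by
  have h1 : Tendsto (fun n : ℕ => ENNReal.ofReal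
      ((8 * exp 1 * α ^ 2 + 64 * exp 2 * α ^ 4) / Real.log n)) atTop (nhds 0) := by
    rw [← ENNReal.ofReal_zero]
    exact (ENNReal.continuous_ofReal.tendsto 0).comp (tendsto_log_nat.const_div_atTop _)
  refine tendsto_of_tendsto_of_tendsto_of_le_of_le' tendsto_const_nhds h1
    (Eventually.of_forall fun _ => zero_le) ?_
  have hd : ∀ᶠ l : ℝ in atTop, 1 ≤ l - (8 * α + 5) * Real.log l := by
    have h2 := Real.isLittleO_log_id_atTop.bound
      (show 0 < 1 / (2 * (8 * α + 5)) by positivity)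
    filter_upwards [h2, eventually_ge_atTop 2] with l h3 h4
    simp only [id, Real.norm_eq_abs] at h3
    rw [abs_of_nonneg (by linarith : (0 : ℝ) ≤ l)] at h3
    have h5 := (le_abs_self _).trans h3
    have h6 : (8 * α + 5) * Real.log l ≤ l / 2 := by
      refine (mul_le_mul_of_nonneg_left h5 (by positivity)).trans (le_of_eq ?_)
      field_simp
    linarith
  have hc : ∀ᶠ l : ℝ in atTop, 8 * α ^ 2 * l ^ 2 ≤ exp l := by
    filter_upwards [(Real.tendsto_exp_div_pow_atTop 2).eventually_ge_atTop (8 * α ^ 2),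
      eventually_gt_atTop 0] with l h3 h4
    rwa [le_div_iff₀ (by positivity)] at h3
  filter_upwards [tendsto_log_nat.eventually hd, tendsto_log_nat.eventually hc,
    tendsto_log_nat.eventually_ge_atTop (16 * α ^ 3 * exp 4),
    tendsto_log_nat.eventually_gt_atTop 0, eventually_gt_atTop 0] with n h1 h2 h3 h4 h5
  exact lower_quant hα heq (Real.exp_log (by exact_mod_cast h5)) (Real.exp_log h4) h3 h2 h1

lemma tendsto_upper {α : ℝ} (hα : 1 < α) (heq : α * Real.log α - α = 1) {f : ℕ → ℝ}
    (hf : Tendsto f atTop atTop) :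
    Tendsto (fun n : ℕ => edgeSpace n {w | α * Real.log n + f n < (maxMinLen w : ℝ)})
      atTop (nhds 0) := by
  have h1 : Tendsto (fun n : ℕ => ENNReal.ofReal (exp α * exp (-(f n * Real.log α))))
      atTop (nhds 0) := by
    rw [← ENNReal.ofReal_zero]
    refine (ENNReal.continuous_ofReal.tendsto 0).comp ?_
    rw [← mul_zero (exp α)]
    exact (Real.tendsto_exp_neg_atTop_nhds_zero.comp
      (hf.atTop_mul_const (Real.log_pos hα))).const_mul _
  refine tendsto_of_tendsto_of_tendsto_of_le_of_le' tendsto_const_nhds h1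
    (Eventually.of_forall fun _ => zero_le) ?_
  filter_upwards [eventually_gt_atTop 0] with n hn
  exact upper_tail hα heq hn (f n)

end Asymptotics

/-- There is a constant `L > 0` such that for every `ω : ℕ → ℝ` tending to infinity and
every `δ ∈ (0,1)`, for all sufficiently large `n`, with probability greater than `1 − δ`
we have `α* log n − L log log n ≤ max_{i,j} |P_{ij}| ≤ α* log n + ω(n)`. In particular,
`max_{i,j} |P_{ij}| / log n → α*` in probability. Here `α*` is the unique solution in
`(1,∞)` of `α log α − α = 1`. -/
theorem stmt2 (αs : ℝ) (hαs : αs ∈ Set.Ioi (1 : ℝ))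
    (heq : αs * Real.log αs - αs = 1) :
    ∃ L > (0 : ℝ),
      (∀ ωf : ℕ → ℝ, Tendsto ωf atTop atTop →
        ∀ δ ∈ Set.Ioo (0 : ℝ) 1, ∀ᶠ n : ℕ in atTop,
          edgeSpace n {w | αs * Real.log n - L * Real.log (Real.log n) ≤ (maxMinLen w : ℝ) ∧
              (maxMinLen w : ℝ) ≤ αs * Real.log n + ωf n}
            > ENNReal.ofReal (1 - δ)) ∧
      (∀ η > (0 : ℝ),
        Tendsto (fun n : ℕ =>
            edgeSpace n {w | η < |(maxMinLen w : ℝ) / Real.log n - αs|})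
          atTop (nhds 0)) := by
  have hα : 1 < αs := hαs
  have hL : 0 < αs * (8 * αs + 5) + 1 := by positivity
  refine ⟨αs * (8 * αs + 5) + 1, hL, fun ωf hω δ hδ => ?_, fun η hη => ?_⟩
  · have h := (tendsto_lower hα heq).add (tendsto_upper hα heq hω)
    rw [add_zero] at h
    have hδ0 : (0 : ENNReal) < ENNReal.ofReal δ := ENNReal.ofReal_pos.2 hδ.1
    filter_upwards [h.eventually_lt_const hδ0, eventually_gt_atTop 0] with n h1 hn
    have := isProb_edgeSpace hn
    set B₁ := {w : Sym2 (Fin n) → ℝ | (maxMinLen w : ℝ) <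
      αs * Real.log n - (αs * (8 * αs + 5) + 1) * Real.log (Real.log n)}
    set B₂ := {w : Sym2 (Fin n) → ℝ | αs * Real.log n + ωf n < (maxMinLen w : ℝ)}
    set A := {w : Sym2 (Fin n) → ℝ | αs * Real.log n -
      (αs * (8 * αs + 5) + 1) * Real.log (Real.log n) ≤ (maxMinLen w : ℝ) ∧
        (maxMinLen w : ℝ) ≤ αs * Real.log n + ωf n}
    -- subadditivity is all that is used, so no measurability of the events is needed
    have hcov : (Set.univ : Set (Sym2 (Fin n) → ℝ)) ⊆ A ∪ (B₁ ∪ B₂) := by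
      intro w _
      by_cases hw1 : w ∈ B₁
      · exact Or.inr (Or.inl hw1)
      by_cases hw2 : w ∈ B₂
      · exact Or.inr (Or.inr hw2)
      exact Or.inl ⟨not_lt.1 hw1, not_lt.1 hw2⟩
    have h2 : 1 ≤ edgeSpace n A + (edgeSpace n B₁ + edgeSpace n B₂) := by
      rw [← measure_univ (μ := edgeSpace n)]
      exact (measure_mono hcov).trans ((measure_union_le _ _).trans
        (by gcongr; exact measure_union_le _ _))
    by_contra hcon
    have h3 : edgeSpace n A ≤ ENNReal.ofReal (1 - δ) := not_lt.1 hcon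
    have h4 : (1 : ENNReal) < ENNReal.ofReal (1 - δ) + ENNReal.ofReal δ :=
      h2.trans_lt (ENNReal.add_lt_add_of_le_of_lt
        (h3.trans_lt ENNReal.ofReal_lt_top).ne h3 h1)
    rw [← ENNReal.ofReal_add (by linarith [hδ.2]) hδ.1.le] at h4
    simp at h4
  · have hf : Tendsto (fun n : ℕ => η * Real.log n) atTop atTop :=
      tendsto_log_nat.const_mul_atTop hη
    have h := (tendsto_lower hα heq).add (tendsto_upper hα heq hf)
    rw [add_zero] at h
    refine tendsto_of_tendsto_of_tendsto_of_le_of_le' tendsto_const_nhds h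
      (Eventually.of_forall fun _ => zero_le) ?_
    have hd : ∀ᶠ l : ℝ in atTop, (αs * (8 * αs + 5) + 1) * Real.log l ≤ η * l := by
      have h2 := Real.isLittleO_log_id_atTop.bound
        (show 0 < η / (αs * (8 * αs + 5) + 1) by positivity)
      filter_upwards [h2, eventually_ge_atTop 0] with l h3 h4
      simp only [id, Real.norm_eq_abs] at h3
      rw [abs_of_nonneg h4] at h3
      refine (mul_le_mul_of_nonneg_left ((le_abs_self _).trans h3) hL.le).trans (le_of_eq ?_)
      field_simp
    filter_upwards [tendsto_log_nat.eventually hd, tendsto_log_nat.eventually_gt_atTop 0]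
      with n h1 h2
    refine (measure_mono fun w hw => ?_).trans (measure_union_le _ _)
    have hw : η < |(maxMinLen w : ℝ) / Real.log n - αs| := hw
    rcases lt_abs.1 hw with h3 | h3
    · right
      have h4 : αs + η < (maxMinLen w : ℝ) / Real.log n := by linarith
      rw [lt_div_iff₀ h2] at h4
      change αs * Real.log n + η * Real.log n < (maxMinLen w : ℝ)
      linarith
    · left
      have h4 : (maxMinLen w : ℝ) / Real.log n < αs - η := by linarith
      rw [div_lt_iff₀ h2] at h4
      change (maxMinLen w : ℝ) < _
      linarith
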